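/- For n ≥ 2, let G ∈ G_{n,n+3} be a weak subdivision of the triangular prism Π₃ that is not also a weak subdivision of K_{3,3} (equivalently, all three of its rung chains have positive length). Then there exists a weak K_{3,3}-subdivision G′ ∈ G_{n,n+3} such that d_2(G′) ≤ d_2(G), d_3(G′) < d_3(G) and d_4(G′) < d_4(G); in particular, G is not p-optimal for any p ∈ (0,1). -/

import Mathlib

open Classical Finset

noncomputable section

/-- A finite multigraph: edges carry two (possibly equal) endpoints. -/
structure Multigraph where
  V : Type
  E : Type
  [fintV : Fintype V]
  [fintE : Fintype E]
  src : E → V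
  tgt : E → V

attribute [instance] Multigraph.fintV Multigraph.fintE

namespace Multigraph

variable (G : Multigraph)

/-- Number of vertices. -/
def nV : ℕ := Fintype.card G.V

/-- Number of edges (with multiplicity). -/
def nE : ℕ := Fintype.card G.E

/-- One step along an edge belonging to the edge set `S`. -/
def stepOn (S : Finset G.E) (u v : G.V) : Prop :=
  ∃ e ∈ S, (G.src e = u ∧ G.tgt e = v) ∨ (G.src e = v ∧ G.tgt e = u)

/-- The spanning subgraph with edge set `S` is connected. -/
def ConnOn (S : Finset G.E) : Prop :=
  ∀ u v : G.V, Relation.ReflTransGen (G.stepOn S) u v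

/-- `G` is connected. -/
def Connected : Prop := G.ConnOn Finset.univ

/-- The edge set `F` disconnects `G` (i.e. is a disconnection). -/
def Disconnects (F : Finset G.E) : Prop := ¬ G.ConnOn (Finset.univ \ F)

/-- `d i G`: the number of `i`-disconnections of `G`. -/
def d (i : ℕ) : ℕ :=
  ((Finset.univ : Finset (Finset G.E)).filter fun F => F.card = i ∧ G.Disconnects F).card

/-- The all-terminal reliability `R(G,p)`: each edge is independently retained with
probability `p`; this is the probability that the retained spanning subgraph is connected. -/
def rel (p : ℝ) : ℝ :=
  ∑ S : Finset G.E, if G.ConnOn S then p ^ S.card * (1 - p) ^ (G.nE - S.card) else 0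

/-- `e` is a bridge. -/
def IsBridge (e : G.E) : Prop := G.Disconnects {e}

def Bridgeless : Prop := ∀ e : G.E, ¬ G.IsBridge e

/-- The number of spanning trees of `G` (connected spanning subgraphs with `nV - 1` edges). -/
def treeCount : ℕ :=
  ((Finset.univ : Finset (Finset G.E)).filter fun S => S.card + 1 = G.nV ∧ G.ConnOn S).card

/-- The edge-connectivity: the least size of a disconnecting set of edges. -/
def edgeConnectivity : ℕ :=
  sInf {i : ℕ | ∃ F : Finset G.E, F.card = i ∧ G.Disconnects F}

/-- Degree of a vertex (a loop counts twice). -/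
def deg (v : G.V) : ℕ :=
  (Finset.univ.filter fun e => G.src e = v).card +
    (Finset.univ.filter fun e => G.tgt e = v).card

/-- The edges crossing the vertex set `A`. -/
def cutEdges (A : Finset G.V) : Finset G.E :=
  Finset.univ.filter fun e =>
    (G.src e ∈ A ∧ G.tgt e ∉ A) ∨ (G.src e ∉ A ∧ G.tgt e ∈ A)

/-- `F` is a cut: the set of edges crossing a nontrivial bipartition of the vertices. -/
def IsCut (F : Finset G.E) : Prop :=
  ∃ A : Finset G.V, A.Nonempty ∧ A ≠ Finset.univ ∧ F = G.cutEdges A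

/-- `F` is a bond: a minimal cut. -/
def IsBond (F : Finset G.E) : Prop :=
  G.IsCut F ∧ ∀ F' ⊆ F, G.IsCut F' → F' = F

/-- Number of `s`-bonds of `G`. -/
def bondCount (s : ℕ) : ℕ :=
  ((Finset.univ : Finset (Finset G.E)).filter fun F => F.card = s ∧ G.IsBond F).card

/-- Adjacency of vertices. -/
def Adj (u v : G.V) : Prop :=
  ∃ e : G.E, (G.src e = u ∧ G.tgt e = v) ∨ (G.src e = v ∧ G.tgt e = u)

/-- `G` is simple: no loops and no parallel edges. -/
def IsSimple : Prop :=
  (∀ e : G.E, G.src e ≠ G.tgt e) ∧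
    ∀ e f : G.E,
      ((G.src e = G.src f ∧ G.tgt e = G.tgt f) ∨ (G.src e = G.tgt f ∧ G.tgt e = G.src f)) →
        e = f

end Multigraph

/-- `G ∈ 𝒢_{n,m}`: connected with `n` vertices and `m` edges. -/
def memG (G : Multigraph) (n m : ℕ) : Prop :=
  G.nV = n ∧ G.nE = m ∧ G.Connected

/-- Isomorphism of multigraphs. -/
structure MGIso (G H : Multigraph) where
  vMap : G.V ≃ H.V
  eMap : G.E ≃ H.E
  ends_eq : ∀ e : G.E,
    (H.src (eMap e) = vMap (G.src e) ∧ H.tgt (eMap e) = vMap (G.tgt e)) ∨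
    (H.src (eMap e) = vMap (G.tgt e) ∧ H.tgt (eMap e) = vMap (G.src e))

def IsIso (G H : Multigraph) : Prop := Nonempty (MGIso G H)

/-- `G` is `p`-optimal in `𝒢_{n,m}`. -/
def pOptimal (G : Multigraph) (n m : ℕ) (p : ℝ) : Prop :=
  memG G n m ∧ ∀ H : Multigraph, memG H n m → H.rel p ≤ G.rel p

/-- `G` is uniquely optimal in `𝒢_{n,m}`: strictly more reliable than every
non-isomorphic member, for every `p ∈ (0,1)`. -/
def UniquelyOptimal (G : Multigraph) (n m : ℕ) : Prop :=
  memG G n m ∧ ∀ H : Multigraph, memG H n m → ¬ IsIso G H →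
    ∀ p : ℝ, 0 < p → p < 1 → H.rel p < G.rel p

noncomputable instance quotFintype {α : Type} [Fintype α] {r : α → α → Prop} :
    Fintype (Quot r) :=
  letI := Classical.decEq (Quot r)
  Fintype.ofSurjective (Quot.mk r) fun q => Quot.exists_rep q

/-- Identification of the endpoints of zero-weight edges. -/
def zeroRel (D : Multigraph) (w : D.E → ℕ) : D.V → D.V → Prop :=
  fun u v => ∃ e : D.E, w e = 0 ∧ D.src e = u ∧ D.tgt e = v

/-- The `j`-th node along the chain replacing the edge `e` (whose chain has `w e` edges). -/
def chainNode (D : Multigraph) (w : D.E → ℕ) (e : D.E) (j : ℕ) :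
    Quot (zeroRel D w) ⊕ (Σ f : D.E, Fin (w f - 1)) :=
  if h : 0 < j ∧ j < w e then Sum.inr ⟨e, ⟨j - 1, by omega⟩⟩
  else if j = 0 then Sum.inl (Quot.mk _ (D.src e))
  else Sum.inl (Quot.mk _ (D.tgt e))

/-- The weak subdivision of `D` determined by the chain lengths `w`: each edge `e` is
replaced by a chain with `w e` edges; zero-weight edges are contracted. -/
def subdivide (D : Multigraph) (w : D.E → ℕ) : Multigraph where
  V := Quot (zeroRel D w) ⊕ (Σ f : D.E, Fin (w f - 1))
  E := Σ f : D.E, Fin (w f)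
  src f := chainNode D w f.1 f.2.val
  tgt f := chainNode D w f.1 (f.2.val + 1)

/-- The zero-weight edges contain no cycle (no "zero cycle"): they form a forest. -/
def ZeroAcyclic (D : Multigraph) (w : D.E → ℕ) : Prop :=
  Fintype.card (Quot (zeroRel D w)) +
      (Finset.univ.filter fun e : D.E => w e = 0).card = Fintype.card D.V

/-- `G` is a weak subdivision of `D` with chain lengths `w`. -/
def IsWeakSubdivision (G D : Multigraph) (w : D.E → ℕ) : Prop :=
  ZeroAcyclic D w ∧ IsIso G (subdivide D w)

/-- `D` is a weak distillation of `G`. -/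
def IsWeakDistillation (D G : Multigraph) : Prop :=
  ∃ w : D.E → ℕ, IsWeakSubdivision G D w

/-- The chain lengths differ pairwise by at most one. -/
def BalancedWeights {E : Type} (w : E → ℕ) : Prop := ∀ e f : E, w e ≤ w f + 1

/-- `D ∈ 𝒟_k`: connected, cubic, 3-edge-connected, of exceedance `k`. -/
def memDk (k : ℕ) (D : Multigraph) : Prop :=
  D.Connected ∧ (∀ v : D.V, D.deg v = 3) ∧
    (∀ F : Finset D.E, D.Disconnects F → 3 ≤ F.card) ∧ D.nE = D.nV + k

/-- Identification of the two endpoints of the edge `e`. -/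
def contractRel (G : Multigraph) (e : G.E) : G.V → G.V → Prop :=
  fun u v => u = G.src e ∧ v = G.tgt e

/-- Contraction of the edge `e`. -/
def Multigraph.contract (G : Multigraph) (e : G.E) : Multigraph :=
  letI := Classical.decEq G.E
  { V := Quot (contractRel G e)
    E := {f : G.E // f ≠ e}
    src := fun f => Quot.mk _ (G.src f.1)
    tgt := fun f => Quot.mk _ (G.tgt f.1) }

/-- `G'` is obtained from `G` by shifting an edge: in an intermediate graph `H`
(the expansion of `G` at a vertex by the new edge `e'`), the edges `e, e'` form a
2-bond; contracting `e'` gives back `G`, while contracting `e` gives `G'`. -/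
def IsShiftOf (G G' : Multigraph) : Prop :=
  ∃ (H : Multigraph) (e e' : H.E), e ≠ e' ∧
    H.src e ≠ H.tgt e ∧ H.src e' ≠ H.tgt e' ∧
    H.IsBond {e, e'} ∧
    IsIso (H.contract e') G ∧ IsIso (H.contract e) G'

/-- Equivalence of graphs: repeated edge shifting. -/
def EquivalentGraphs (G G' : Multigraph) : Prop :=
  Relation.ReflTransGen IsShiftOf G G'

/-- `G'` is obtained from `G` by moving the (non-loop) edge `e`: contracting `e` and
expanding a new edge, identified with `e` via `φ`, at an arbitrary vertex.
Equivalently, `G/e` and `G'/φ e` agree, compatibly with the edge identification `φ`. -/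
def MovedEdge (G G' : Multigraph) (φ : G.E ≃ G'.E) (e : G.E) : Prop :=
  G.src e ≠ G.tgt e ∧ G'.src (φ e) ≠ G'.tgt (φ e) ∧
  ∃ ψ : Quot (contractRel G e) ≃ Quot (contractRel G' (φ e)),
    ∀ f : G.E, f ≠ e →
      ((ψ (Quot.mk _ (G.src f)) = Quot.mk _ (G'.src (φ f)) ∧
        ψ (Quot.mk _ (G.tgt f)) = Quot.mk _ (G'.tgt (φ f))) ∨
       (ψ (Quot.mk _ (G.src f)) = Quot.mk _ (G'.tgt (φ f)) ∧
        ψ (Quot.mk _ (G.tgt f)) = Quot.mk _ (G'.src (φ f))))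

/-- Move one edge from the chain `a` to the chain `b`. -/
def moveWeight {E : Type} (w : E → ℕ) (a b : E) : E → ℕ :=
  fun g => if g = b then w b + 1 else if g = a then w a - 1 else w g

/-- The chains of maximal length. -/
def maxChains (D : Multigraph) (w : D.E → ℕ) : Finset D.E :=
  Finset.univ.filter fun e => ∀ f : D.E, w f ≤ w e

/-- The chains of minimal length. -/
def minChains (D : Multigraph) (w : D.E → ℕ) : Finset D.E :=
  Finset.univ.filter fun e => ∀ f : D.E, w e ≤ w f

/-- Degree of `v` within the edge set `S`. -/
def degIn (D : Multigraph) (S : Finset D.E) (v : D.V) : ℕ :=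
  (S.filter fun e => D.src e = v).card + (S.filter fun e => D.tgt e = v).card

/-- `S` is a matching (pairwise non-adjacent edges). -/
def IsMatchingIn (D : Multigraph) (S : Finset D.E) : Prop := ∀ v : D.V, degIn D S v ≤ 1

/-- `S` is a path with three edges. -/
def IsPath3In (D : Multigraph) (S : Finset D.E) : Prop :=
  S.card = 3 ∧ (∀ v : D.V, degIn D S v ≤ 2) ∧
    (Finset.univ.filter fun v : D.V => degIn D S v = 1).card = 2

/-- `S` is the disjoint union of a path with three edges and a single edge. -/
def IsPath3PlusEdgeIn (D : Multigraph) (S : Finset D.E) : Prop :=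
  S.card = 4 ∧ (∀ v : D.V, degIn D S v ≤ 2) ∧
    (Finset.univ.filter fun v : D.V => degIn D S v = 1).card = 4 ∧
    ∃ e ∈ S, degIn D S (D.src e) = 2 ∧ degIn D S (D.tgt e) = 2

/-- `S` is the disjoint union of two paths with two edges each. -/
def IsTwoPlusTwoIn (D : Multigraph) (S : Finset D.E) : Prop :=
  S.card = 4 ∧ (∀ v : D.V, degIn D S v ≤ 2) ∧
    (Finset.univ.filter fun v : D.V => degIn D S v = 1).card = 4 ∧
    ∀ e ∈ S, degIn D S (D.src e) = 1 ∨ degIn D S (D.tgt e) = 1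

/-- Two edges sharing a vertex. -/
def AdjEdges (D : Multigraph) (a b : D.E) : Prop :=
  ∃ v : D.V, (D.src a = v ∨ D.tgt a = v) ∧ (D.src b = v ∨ D.tgt b = v)

/-- The number of incidences of edges of weight `c` at the vertex `u`. -/
def incCount (D : Multigraph) (w : D.E → ℕ) (u : D.V) (c : ℕ) : ℕ :=
  (Finset.univ.filter fun e : D.E => D.src e = u ∧ w e = c).card +
    (Finset.univ.filter fun e : D.E => D.tgt e = u ∧ w e = c).card

/-- The `π^v`-value of the vertex `u`: the number of incident edges of weight `q + 1`
minus the number of incident edges of weight `q - 1`. -/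
def piV (D : Multigraph) (w : D.E → ℕ) (q : ℕ) (u : D.V) : ℤ :=
  (incCount D w u (q + 1) : ℤ) -
    (if q = 0 then 0 else (incCount D w u (q - 1) : ℤ))

/-- The `π^v`-values are balanced: pairwise differences at most one. -/
def BalancedPiV (D : Multigraph) (w : D.E → ℕ) (q : ℕ) : Prop :=
  ∀ u v : D.V, piV D w q u ≤ piV D w q v + 1

/-- The standard weight `q`, where `m = 3kq + r` with `-3k/2 < r ≤ 3k/2`. -/
def stdWeight (m k : ℕ) : ℕ := (2 * m + 3 * k - 1) / (6 * k)

/-- `w` is a balanced weighting of `D` of total size `m` (the implied weak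
subdivision is the generic member of `ℬ_m(D)`). -/
def IsBalancedWeighting (D : Multigraph) (w : D.E → ℕ) (m : ℕ) : Prop :=
  (∑ e : D.E, w e) = m ∧ BalancedWeights w ∧ ZeroAcyclic D w

/-- Every 3-bond of `D` is trivial (consists of the three edges at a single vertex). -/
def OnlyTrivialThreeBonds (D : Multigraph) : Prop :=
  ∀ F : Finset D.E, D.IsBond F → F.card = 3 →
    ∃ u : D.V, F = Finset.univ.filter fun e => D.src e = u ∨ D.tgt e = u

/-- The 3-dipole: two vertices joined by three parallel edges. -/
def dipole3 : Multigraph where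
  V := Fin 2
  E := Fin 3
  src _ := 0
  tgt _ := 1

/-- The complete graph `K₄`. -/
def K4 : Multigraph where
  V := Fin 4
  E := {p : Fin 4 × Fin 4 // p.1 < p.2}
  src p := p.1.1
  tgt p := p.1.2

/-- The complete bipartite graph `K_{3,3}`. -/
def K33 : Multigraph where
  V := Fin 3 ⊕ Fin 3
  E := Fin 3 × Fin 3
  src p := Sum.inl p.1
  tgt p := Sum.inr p.2

/-- The triangular prism `Π₃`; the edges `Sum.inr i` are the rungs. -/
def prism : Multigraph where
  V := Fin 3 × Bool
  E := (Fin 3 × Bool) ⊕ Fin 3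
  src := fun e => match e with
    | Sum.inl (i, b) => (i, b)
    | Sum.inr i => (i, false)
  tgt := fun e => match e with
    | Sum.inl (i, b) => (i + 1, b)
    | Sum.inr i => (i, true)

/-- The Wagner graph (the 4-Möbius ladder): the edges `Sum.inl i` are the rails
(the 8-cycle) and the edges `Sum.inr j` are the rungs. -/
def wagner : Multigraph where
  V := Fin 8
  E := Fin 8 ⊕ Fin 4
  src := fun e => match e with
    | Sum.inl i => i
    | Sum.inr j => ⟨j.val, by omega⟩
  tgt := fun e => match e with
    | Sum.inl i => i + 1
    | Sum.inr j => ⟨j.val + 4, by omega⟩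

/-- The Petersen graph. -/
def petersen : Multigraph where
  V := Fin 5 × Bool
  E := Fin 5 ⊕ Fin 5 ⊕ Fin 5
  src := fun e => match e with
    | Sum.inl i => (i, false)
    | Sum.inr (Sum.inl i) => (i, false)
    | Sum.inr (Sum.inr i) => (i, true)
  tgt := fun e => match e with
    | Sum.inl i => (i + 1, false)
    | Sum.inr (Sum.inl i) => (i, true)
    | Sum.inr (Sum.inr i) => (i + 2, true)


theorem conn_iff (G : Multigraph) (S : Finset G.E) : G.ConnOn S ↔
    ∀ c : G.V → Prop, (∀ e ∈ S, (c (G.src e) ↔ c (G.tgt e))) → ∀ u v, c u → c v := by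
  constructor
  · intro h c hc u v hu
    have := h u v
    induction this with
    | refl => exact hu
    | tail _ hs ih =>
      obtain ⟨e, he, h1 | h1⟩ := hs
      · rw [← h1.2]; rw [← h1.1] at ih; exact (hc e he).1 ih
      · rw [← h1.1]; rw [← h1.2] at ih; exact (hc e he).2 ih
  · intro h u v
    refine h (fun x => Relation.ReflTransGen (G.stepOn S) u x) ?_ u v .refl
    intro e he
    constructor
    · intro h1; exact h1.tail ⟨e, he, Or.inl ⟨rfl, rfl⟩⟩
    · intro h1; exact h1.tail ⟨e, he, Or.inr ⟨rfl, rfl⟩⟩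

theorem cn_zero (D : Multigraph) (w : D.E → ℕ) (e : D.E) :
    chainNode D w e 0 = Sum.inl (Quot.mk _ (D.src e)) := by
  simp [chainNode]

theorem cn_inner (D : Multigraph) (w : D.E → ℕ) (e : D.E) (j : ℕ) (h : 0 < j ∧ j < w e) :
    chainNode D w e j = Sum.inr ⟨e, ⟨j - 1, by omega⟩⟩ := by
  simp [chainNode, h]

theorem cn_last (D : Multigraph) (w : D.E → ℕ) (e : D.E) :
    chainNode D w e (w e) = Sum.inl (Quot.mk _ (D.tgt e)) := by
  by_cases h : w e = 0
  · rw [h, cn_zero]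
    congr 1
    exact Quot.sound ⟨e, h, rfl, rfl⟩
  · simp [chainNode, h]

theorem cn_inr (D : Multigraph) (w : D.E → ℕ) (e : D.E) (j : Fin (w e - 1)) :
    (Sum.inr ⟨e, j⟩ : (subdivide D w).V) = chainNode D w e (j.val + 1) := by
  rw [cn_inner _ _ _ _ ⟨by omega, by omega⟩]
  rfl

/-- extend a colouring of chain positions to the subdivision -/
def extCol (D : Multigraph) (w : D.E → ℕ) (c : Quot (zeroRel D w) → Prop)
    (x : D.E → ℕ → Prop) : (subdivide D w).V → Prop
  | Sum.inl q => c q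
  | Sum.inr ⟨f, j⟩ => x f (j.val + 1)

theorem extCol_node (D : Multigraph) (w : D.E → ℕ) (c : Quot (zeroRel D w) → Prop)
    (x : D.E → ℕ → Prop) (f : D.E) (h0 : x f 0 ↔ c (Quot.mk _ (D.src f)))
    (h1 : x f (w f) ↔ c (Quot.mk _ (D.tgt f))) (j : ℕ) (hj : j ≤ w f) :
    extCol D w c x (chainNode D w f j) ↔ x f j := by
  rcases Nat.eq_zero_or_pos j with rfl | hp
  · rw [cn_zero]; exact h0.symm
  · rcases hj.lt_or_eq with hl | rfl
    · rw [cn_inner _ _ _ _ ⟨hp, hl⟩]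
      show x f (j - 1 + 1) ↔ _
      rw [Nat.sub_add_cancel hp]
    · rw [cn_last]; exact h1.symm

/-- Colours along a chain segment. -/
theorem chain_const (D : Multigraph) (w : D.E → ℕ) (c : (subdivide D w).V → Prop) (f : D.E)
    (a b : ℕ) (hab : a ≤ b)
    (h : ∀ i, a ≤ i → i < b →
      (c (chainNode D w f i) ↔ c (chainNode D w f (i+1)))) :
    c (chainNode D w f a) ↔ c (chainNode D w f b) := by
  induction b, hab using Nat.le_induction with
  | base => rfl
  | succ n hn ih =>
    exact (ih (fun i h1 h2 => h i h1 (by omega))).trans (h n hn (by omega))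

def fullCh (D : Multigraph) (w : D.E → ℕ) (S : Finset (subdivide D w).E) : Finset D.E :=
  univ.filter fun f => ∀ j : Fin (w f), (⟨f, j⟩ : (subdivide D w).E) ∈ S

theorem sub_conn (D : Multigraph) (w : D.E → ℕ) (S : Finset (subdivide D w).E) :
    (subdivide D w).ConnOn S ↔
      (∀ f : D.E, ∀ i j : Fin (w f), (⟨f, i⟩ : (subdivide D w).E) ∉ S →
        (⟨f, j⟩ : (subdivide D w).E) ∉ S → i = j) ∧ D.ConnOn (fullCh D w S) := by
  rw [conn_iff, conn_iff]
  constructor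
  · intro H
    constructor
    · intro f
      have key : ∀ i j : Fin (w f), (⟨f, i⟩ : (subdivide D w).E) ∉ S →
        (⟨f, j⟩ : (subdivide D w).E) ∉ S → ¬ i < j := by
        intro i j hi hj hlt
        have hlt' : i.val < j.val := hlt
        have hjl := j.2
        have hx := H (extCol D w (fun _ => False)
          (fun g k => g = f ∧ i.val < k ∧ k ≤ j.val)) ?_ (chainNode D w f (i.val+1))
            (chainNode D w f 0) ?_
        · rw [cn_zero] at hx; exact hx
        · rintro ⟨g, k⟩ hk
          show extCol _ _ _ _ (chainNode D w g k.val) ↔ extCol _ _ _ _ (chainNode D w g (k.val+1))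
          have h1 : (fun (g:D.E) (k:ℕ) => g = f ∧ i.val < k ∧ k ≤ j.val) g (w g) ↔ False := by
            simp only [iff_false]
            rintro ⟨rfl, h1, h2⟩; omega
          rw [extCol_node _ _ _ _ _ (by simp) h1 _ k.2.le,
            extCol_node _ _ _ _ _ (by simp) h1 _ (by omega)]
          by_cases hg : g = f
          · subst hg
            have n1 : k ≠ i := by rintro rfl; exact hi hk
            have n2 : k ≠ j := by rintro rfl; exact hj hk
            have n1' : k.val ≠ i.val := fun h => n1 (Fin.ext h)
            have n2' : k.val ≠ j.val := fun h => n2 (Fin.ext h)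
            simp only [true_and]; omega
          · simp [hg]
        · have h1 : (fun (g:D.E) (k:ℕ) => g = f ∧ i.val < k ∧ k ≤ j.val) f (w f) ↔ False := by
            simp only [iff_false]
            rintro ⟨_, h1, h2⟩; omega
          rw [extCol_node _ _ _ _ _ (by simp) h1 _ (by omega)]
          exact ⟨rfl, by omega, by omega⟩
      intro i j hi hj
      have := key i j hi hj
      have := key j i hj hi
      exact le_antisymm (by simpa using this) (by simpa using key i j hi hj)
    · intro c hc u v hu
      have hl : ∀ a b, zeroRel D w a b → c a = c b := by
        rintro a b ⟨e, he, rfl, rfl⟩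
        refine propext (hc e ?_)
        simp only [fullCh, mem_filter, mem_univ, true_and]
        intro j; have := j.2; omega
      set C : Quot (zeroRel D w) → Prop := Quot.lift c hl
      set x : D.E → ℕ → Prop := fun f k =>
        if (∀ j : Fin (w f), j.val < k → (⟨f, j⟩ : (subdivide D w).E) ∈ S) then c (D.src f)
          else c (D.tgt f) with hx
      have h0 : ∀ f, x f 0 ↔ C (Quot.mk _ (D.src f)) := by
        intro f; simp [hx, C]
      have h1 : ∀ f, x f (w f) ↔ C (Quot.mk _ (D.tgt f)) := by
        intro f
        show x f (w f) ↔ c (D.tgt f)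
        simp only [hx]
        split_ifs with h
        · refine hc f ?_
          simp only [fullCh, mem_filter, mem_univ, true_and]
          intro j; exact h j j.2
        · rfl
      refine H (extCol D w C x) ?_ (Sum.inl (Quot.mk _ u)) (Sum.inl (Quot.mk _ v)) hu
      rintro ⟨g, k⟩ hk
      show extCol _ _ _ _ (chainNode D w g k.val) ↔ extCol _ _ _ _ (chainNode D w g (k.val+1))
      rw [extCol_node _ _ _ _ _ (h0 g) (h1 g) _ k.2.le,
            extCol_node _ _ _ _ _ (h0 g) (h1 g) _ (by omega)]
      have : (∀ j : Fin (w g), j.val < k.val → (⟨g, j⟩ : (subdivide D w).E) ∈ S) ↔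
        (∀ j : Fin (w g), j.val < k.val + 1 → (⟨g, j⟩ : (subdivide D w).E) ∈ S) := by
        constructor
        · intro h j hj
          rcases Nat.lt_succ_iff_lt_or_eq.1 hj with h2 | h2
          · exact h j h2
          · rw [Fin.ext h2]; exact hk
        · intro h j hj; exact h j (by omega)
      simp only [hx]
      rw [if_congr this rfl rfl]
  · rintro ⟨H1, H2⟩ c hc
    have step : ∀ f, ∀ i : ℕ, ∀ hi : i < w f, (⟨f, ⟨i, hi⟩⟩ : (subdivide D w).E) ∈ S →
      (c (chainNode D w f i) ↔ c (chainNode D w f (i+1))) := fun f i hi h => hc _ h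
    have base : ∀ a b : D.V, c (Sum.inl (Quot.mk _ a)) → c (Sum.inl (Quot.mk _ b)) := by
      refine H2 (fun a => c (Sum.inl (Quot.mk _ a))) ?_
      intro f hf
      simp only [fullCh, mem_filter, mem_univ, true_and] at hf
      have := chain_const D w c f 0 (w f) (Nat.zero_le _) (fun i _ h => step f i h (hf ⟨i, h⟩))
      rwa [cn_zero, cn_last] at this
    have inner : ∀ v : (subdivide D w).V, ∃ a : D.V, c v ↔ c (Sum.inl (Quot.mk _ a)) := by
      rintro (q | ⟨f, j⟩)
      · induction q using Quot.ind with
        | mk a => exact ⟨a, Iff.rfl⟩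
      · rw [cn_inr]
        have hj := j.2
        by_cases hA : ∀ i : Fin (w f), i.val < j.val + 1 → (⟨f, i⟩ : (subdivide D w).E) ∈ S
        · refine ⟨D.src f, ?_⟩
          rw [← cn_zero]
          exact (chain_const D w c f 0 (j.val+1) (Nat.zero_le _)
            (fun i _ h => step f i (by omega) (hA ⟨i, by omega⟩ h))).symm
        · push Not at hA
          obtain ⟨i0, hi0, hi0'⟩ := hA
          refine ⟨D.tgt f, ?_⟩
          rw [← cn_last]
          refine (chain_const D w c f (j.val+1) (w f) (by omega)
            (fun i h1 h => step f i (by omega) ?_))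
          by_contra hcon
          have := H1 f _ _ hi0' hcon
          rw [this] at hi0
          simp at hi0; omega
    intro u v hu
    obtain ⟨a, ha⟩ := inner u
    obtain ⟨b, hb⟩ := inner v
    exact hb.2 (base a b (ha.1 hu))


def cN (D : Multigraph) (w : D.E → ℕ) (i : ℕ) : ℕ :=
  ∑ T ∈ (univ : Finset (Finset D.E)).filter (fun T => T.card = i ∧ D.ConnOn (univ \ T)),
    ∏ e ∈ T, w e

def eFst (D : Multigraph) (w : D.E → ℕ) (x : (subdivide D w).E) : D.E := x.1
def eMk (D : Multigraph) (w : D.E → ℕ) (f : D.E) (j : Fin (w f)) : (subdivide D w).E := ⟨f, j⟩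

theorem eFst_eMk (D : Multigraph) (w : D.E → ℕ) (f : D.E) (j : Fin (w f)) :
    eFst D w (eMk D w f j) = f := rfl

theorem eMk_inj (D : Multigraph) (w : D.E → ℕ) (f : D.E) (i j : Fin (w f))
    (h : eMk D w f i = eMk D w f j) : i = j := by
  obtain ⟨_, h2⟩ := Sigma.mk.inj_iff.1 h
  exact eq_of_heq h2

theorem eMk_surj (D : Multigraph) (w : D.E → ℕ) (x : (subdivide D w).E) :
    ∃ f j, x = eMk D w f j := ⟨x.1, x.2, rfl⟩

theorem conn_compl (D : Multigraph) (w : D.E → ℕ) (F : Finset (subdivide D w).E) :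
    (subdivide D w).ConnOn (univ \ F) ↔
      Set.InjOn (eFst D w) F ∧
        D.ConnOn (univ \ F.image (eFst D w)) := by
  rw [sub_conn]
  have nm : ∀ f j, eMk D w f j ∉ univ \ F ↔ eMk D w f j ∈ F := by intro f j; simp
  have h2 : fullCh D w (univ \ F) = univ \ F.image (eFst D w) := by
    ext f
    rw [fullCh, mem_filter, mem_sdiff, mem_image]
    simp only [mem_univ, true_and, not_exists, not_and]
    constructor
    · intro h x hx hf
      obtain ⟨g, k, rfl⟩ := eMk_surj D w x
      rw [eFst_eMk] at hf
      subst hf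
      exact (nm g k).2 hx (h k)
    · intro h j
      by_contra hj
      exact h _ ((nm f j).1 hj) rfl
  rw [h2]
  refine and_congr_left fun _ => ?_
  constructor
  · intro h x hx y hy hfg
    obtain ⟨f, i, rfl⟩ := eMk_surj D w x
    obtain ⟨g, j, rfl⟩ := eMk_surj D w y
    rw [eFst_eMk, eFst_eMk] at hfg
    subst hfg
    rw [h f i j ((nm f i).2 hx) ((nm f j).2 hy)]
  · intro h f i j hi hj
    exact eMk_inj D w f i j (h ((nm f i).1 hi) ((nm f j).1 hj) rfl)

theorem count_conn (D : Multigraph) (w : D.E → ℕ) (i : ℕ) :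
    ((univ : Finset (Finset (subdivide D w).E)).filter
      fun F => F.card = i ∧ (subdivide D w).ConnOn (univ \ F)).card = cN D w i := by
  have hmaps : ∀ F ∈ ((univ : Finset (Finset (subdivide D w).E)).filter
      fun F => F.card = i ∧ (subdivide D w).ConnOn (univ \ F)),
      F.image (eFst D w) ∈
      (univ : Finset (Finset D.E)).filter (fun T => T.card = i ∧ D.ConnOn (univ \ T)) := by
    intro F hF
    simp only [mem_filter, mem_univ, true_and] at hF ⊢
    rw [conn_compl] at hF
    refine ⟨?_, hF.2.2⟩
    rw [card_image_of_injOn hF.2.1, hF.1]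
  rw [card_eq_sum_card_fiberwise hmaps, cN]
  refine sum_congr rfl fun T hT => ?_
  simp only [mem_filter, mem_univ, true_and] at hT
  have hc : (T.pi (fun e => (univ : Finset (Fin (w e))))).card = ∏ e ∈ T, w e := by
    rw [card_pi]; simp
  rw [← hc]
  symm
  have memIm : ∀ (s : ∀ e ∈ T, Fin (w e)) (f : D.E) (k : Fin (w f)),
      eMk D w f k ∈ T.attach.image (fun e => eMk D w e.1 (s e.1 e.2)) ↔
      ∃ h : f ∈ T, k = s f h := by
    intro s f k
    simp only [mem_image, mem_attach, true_and, Subtype.exists]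
    constructor
    · rintro ⟨a, ha, h⟩
      have : a = f := congrArg (eFst D w) h
      subst this
      exact ⟨ha, (eMk_inj _ _ _ _ _ h).symm⟩
    · rintro ⟨h, h2⟩
      exact ⟨f, h, by rw [← h2]⟩
  refine card_bij (fun s _ => T.attach.image
    (fun e => eMk D w e.1 (s e.1 e.2))) ?_ ?_ ?_
  · intro s _
    have hinj : Set.InjOn (eFst D w) (T.attach.image
      (fun e => eMk D w e.1 (s e.1 e.2)) : Finset (subdivide D w).E) := by
      intro x hx y hy hxy
      obtain ⟨f, i, rfl⟩ := eMk_surj D w x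
      obtain ⟨g, j, rfl⟩ := eMk_surj D w y
      rw [eFst_eMk, eFst_eMk] at hxy
      subst hxy
      obtain ⟨h1, h2⟩ := (memIm s _ _).1 hx
      obtain ⟨h3, h4⟩ := (memIm s _ _).1 hy
      rw [h2.trans h4.symm]
    have him : (T.attach.image
      (fun e => eMk D w e.1 (s e.1 e.2))).image (eFst D w) = T := by
      ext f
      rw [mem_image]
      constructor
      · rintro ⟨x, hx, rfl⟩
        obtain ⟨f, i, rfl⟩ := eMk_surj D w x
        exact ((memIm s _ _).1 hx).1
      · intro hf
        exact ⟨eMk D w f (s f hf), (memIm s _ _).2 ⟨hf, rfl⟩, rfl⟩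
    simp only [mem_filter, mem_univ, true_and]
    refine ⟨⟨?_, ?_⟩, him⟩
    · rw [← hT.1, ← card_image_of_injOn hinj, him]
    · rw [conn_compl, him]; exact ⟨hinj, hT.2⟩
  · intro s _ t _ hst
    funext e he
    have := (memIm s e (s e he)).2 ⟨he, rfl⟩
    rw [hst] at this
    obtain ⟨h1, h2⟩ := (memIm t _ _).1 this
    exact h2
  · intro F hF
    simp only [mem_filter, mem_univ, true_and] at hF
    obtain ⟨⟨h1, h2⟩, h3⟩ := hF
    rw [conn_compl] at h2
    have : ∀ e, ∀ he : e ∈ T, ∃ k : Fin (w e), eMk D w e k ∈ F := by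
      intro e he
      rw [← h3, mem_image] at he
      obtain ⟨x, hx, rfl⟩ := he
      obtain ⟨f, i, rfl⟩ := eMk_surj D w x
      exact ⟨i, hx⟩
    choose s hs using this
    refine ⟨s, by simp, ?_⟩
    ext x
    obtain ⟨f, i, rfl⟩ := eMk_surj D w x
    rw [memIm]
    constructor
    · rintro ⟨h, h'⟩
      rw [h']; exact hs f h
    · intro hx
      have hT' : f ∈ T := by
        rw [← h3, mem_image]; exact ⟨_, hx, rfl⟩
      exact ⟨hT', (eMk_inj _ _ _ _ _ (h2.1 (hs f hT') hx rfl)).symm⟩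

/-- Number of connected deletions, general graph. -/
def cG (G : Multigraph) (i : ℕ) : ℕ :=
  ((univ : Finset (Finset G.E)).filter fun F => F.card = i ∧ G.ConnOn (univ \ F)).card

theorem d_add_cG (G : Multigraph) (i : ℕ) : G.d i + cG G i = G.nE.choose i := by
  have : ((univ : Finset (Finset G.E)).filter fun F => F.card = i).card = G.nE.choose i := by
    have h : (univ : Finset (Finset G.E)).filter (fun F => F.card = i) =
        powersetCard i univ := by
      ext F; simp [mem_powersetCard]
    rw [h, card_powersetCard]; rfl
  rw [← this, Multigraph.d, cG, ← card_union_of_disjoint]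
  · congr 1
    ext F
    simp only [mem_union, mem_filter, mem_univ, true_and]
    unfold Multigraph.Disconnects
    tauto
  · rw [disjoint_left]
    intro F
    simp only [mem_filter, mem_univ, true_and]
    unfold Multigraph.Disconnects
    tauto

theorem rel_eq (G : Multigraph) (p : ℝ) :
    G.rel p = ∑ i ∈ range (G.nE + 1), (cG G i : ℝ) * (p ^ (G.nE - i) * (1 - p) ^ i) := by
  have h1 : G.rel p = ∑ F : Finset G.E, if G.ConnOn (univ \ F) then
      p ^ (G.nE - F.card) * (1 - p) ^ F.card else 0 := by
    rw [Multigraph.rel]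
    refine Fintype.sum_equiv ⟨fun S => univ \ S, fun S => univ \ S, fun S => by simp,
      fun S => by simp⟩ _ _ ?_
    intro S
    have hS : S.card ≤ G.nE := card_le_univ S
    have h2 : (univ \ S).card = G.nE - S.card := by
      rw [card_sdiff_of_subset (subset_univ _)]; rfl
    simp only [Equiv.coe_fn_mk, sdiff_sdiff_right_self, inf_eq_inter, univ_inter, h2]
    rw [Nat.sub_sub_self hS]
  rw [h1, ← sum_fiberwise_of_maps_to (s := univ) (t := range (G.nE + 1))
    (g := fun F : Finset G.E => F.card)
    (fun F _ => mem_range.2 (Nat.lt_succ_of_le (card_le_univ F)))]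
  refine sum_congr rfl fun i _ => ?_
  rw [← sum_filter, filter_filter, sum_congr rfl (g := fun _ => p ^ (G.nE - i) * (1 - p) ^ i)]
  · rw [sum_const, nsmul_eq_mul, cG]
  · intro F hF
    simp only [mem_filter, mem_univ, true_and] at hF
    rw [hF.1]

theorem cG_sub (D : Multigraph) (w : D.E → ℕ) (i : ℕ) : cG (subdivide D w) i = cN D w i :=
  count_conn D w i

def MGIso.symm' {G H : Multigraph} (φ : MGIso G H) : MGIso H G where
  vMap := φ.vMap.symm
  eMap := φ.eMap.symm
  ends_eq := by
    intro e
    have := φ.ends_eq (φ.eMap.symm e)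
    simp only [Equiv.apply_symm_apply] at this
    rcases this with h | h
    · left; rw [h.1, h.2]; simp
    · right; rw [h.1, h.2]; simp

theorem iso_conn {G H : Multigraph} (φ : MGIso G H) (S : Finset G.E) (h : G.ConnOn S) :
    H.ConnOn (S.map φ.eMap.toEmbedding) := by
  rw [conn_iff] at h ⊢
  intro c hc u v hu
  have := h (fun x => c (φ.vMap x)) ?_ (φ.vMap.symm u) (φ.vMap.symm v) (by simpa using hu)
  · simpa using this
  · intro e he
    have h1 := hc (φ.eMap e) (by simpa using he)
    rcases φ.ends_eq e with h | h
    · rwa [h.1, h.2] at h1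
    · rw [h.1, h.2] at h1; exact h1.symm

theorem iso_cG_le {G H : Multigraph} (φ : MGIso G H) (i : ℕ) : cG G i ≤ cG H i := by
  refine card_le_card_of_injOn (fun F => F.map φ.eMap.toEmbedding) ?_ ?_
  · intro F hF
    simp only [coe_filter, mem_univ, true_and, Set.mem_setOf_eq] at hF ⊢
    refine ⟨by simp [hF.1], ?_⟩
    have := iso_conn φ _ hF.2
    convert this using 1
    ext x
    simp
  · intro F _ F' _ h
    exact Finset.map_injective _ h

theorem iso_cG {G H : Multigraph} (φ : MGIso G H) (i : ℕ) : cG G i = cG H i :=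
  le_antisymm (iso_cG_le φ i) (iso_cG_le φ.symm' i)

theorem iso_nE {G H : Multigraph} (φ : MGIso G H) : G.nE = H.nE := Fintype.card_congr φ.eMap
theorem iso_nV {G H : Multigraph} (φ : MGIso G H) : G.nV = H.nV := Fintype.card_congr φ.vMap


def eRel (D : Multigraph) (Z : Finset D.E) : D.V → D.V → Prop :=
  fun u v => ∃ e ∈ Z, D.src e = u ∧ D.tgt e = v

theorem zeroRel_eq (D : Multigraph) (w : D.E → ℕ) :
    zeroRel D w = eRel D (univ.filter fun e => w e = 0) := by
  funext u v
  simp [zeroRel, eRel]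

theorem q_insert (D : Multigraph) (Z : Finset D.E) (e : D.E) :
    Fintype.card (Quot (eRel D Z)) ≤ Fintype.card (Quot (eRel D (insert e Z))) + 1 := by
  rw [← Fintype.card_option]
  let mk : D.V → Quot (eRel D Z) := Quot.mk _
  let ψ : Quot (eRel D (insert e Z)) → Quot (eRel D Z) :=
    Quot.lift (fun a => if mk a = mk (D.src e) then mk (D.tgt e) else mk a) (by
      rintro a b ⟨f, hf, rfl, rfl⟩
      rcases mem_insert.1 hf with rfl | hf
      · simp
      · have : mk (D.src f) = mk (D.tgt f) := Quot.sound ⟨f, hf, rfl, rfl⟩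
        simp only [this])
  refine Fintype.card_le_of_surjective
    (fun o => match o with
      | none => mk (D.src e)
      | some x => ψ x) ?_
  intro y
  induction y using Quot.ind with
  | mk a =>
    by_cases h : mk a = mk (D.src e)
    · exact ⟨none, h.symm⟩
    · refine ⟨some (Quot.mk _ a), ?_⟩
      show (if mk a = mk (D.src e) then mk (D.tgt e) else mk a) = mk a
      rw [if_neg h]

theorem q_union (D : Multigraph) (Z Y : Finset D.E) :
    Fintype.card (Quot (eRel D Z)) ≤ Fintype.card (Quot (eRel D (Z ∪ Y))) + Y.card := by
  induction Y using Finset.induction_on with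
  | empty => simp
  | insert e Y he ih =>
    rw [card_insert_of_notMem he, union_insert]
    have := q_insert D (Z ∪ Y) e
    omega

theorem q_empty (D : Multigraph) :
    Fintype.card D.V ≤ Fintype.card (Quot (eRel D ∅)) := by
  refine Fintype.card_le_of_injective (Quot.mk _) ?_
  intro a b h
  exact congrArg (Quot.lift id (by rintro a b ⟨f, hf, _⟩; simp at hf)) h

theorem q_low (D : Multigraph) (Z : Finset D.E) :
    Fintype.card D.V ≤ Fintype.card (Quot (eRel D Z)) + Z.card := by
  have := q_union D ∅ Z
  rw [empty_union] at this
  exact (q_empty D).trans this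

theorem q_conn (D : Multigraph) (S : Finset D.E) (h : D.ConnOn S) :
    Fintype.card (Quot (eRel D S)) ≤ 1 := by
  rw [Fintype.card_le_one_iff]
  intro a b
  induction a using Quot.ind with
  | mk a =>
    induction b using Quot.ind with
    | mk b =>
      rw [conn_iff] at h
      refine (h (fun x => (Quot.mk (eRel D S) x) = Quot.mk _ a) ?_ a b rfl).symm
      intro e he
      have : Quot.mk (eRel D S) (D.src e) = Quot.mk _ (D.tgt e) :=
        Quot.sound ⟨e, he, rfl, rfl⟩
      simp only [this]

theorem conn_card (D : Multigraph) (T : Finset D.E) (h : D.ConnOn (univ \ T)) :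
    Fintype.card D.V + T.card ≤ Fintype.card D.E + 1 := by
  have h1 := q_low D (univ \ T)
  have h2 := q_conn D _ h
  have h3 : (univ \ T).card + T.card = Fintype.card D.E :=
    card_sdiff_add_card_eq_card (subset_univ T)
  omega

theorem cN_big (D : Multigraph) (w : D.E → ℕ) (i : ℕ)
    (h : Fintype.card D.E + 1 < Fintype.card D.V + i) : cN D w i = 0 := by
  rw [cN, filter_false_of_mem, sum_empty]
  rintro T _ ⟨h1, h2⟩
  have := conn_card D T h2
  omega

theorem ZA_of (D : Multigraph) (w : D.E → ℕ) (T : Finset D.E) (h : D.ConnOn (univ \ T))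
    (hT : Fintype.card D.V + T.card = Fintype.card D.E + 1) (hw : ∀ e ∈ T, w e ≠ 0) :
    ZeroAcyclic D w := by
  unfold ZeroAcyclic
  have h0 : Fintype.card (Quot (zeroRel D w)) =
    Fintype.card (Quot (eRel D (univ.filter fun e => w e = 0))) := by
    rw [zeroRel_eq]
  rw [h0]
  set Z : Finset D.E := univ.filter fun e => w e = 0 with hZ
  have h1 := q_low D Z
  have hsub : Z ⊆ univ \ T := by
    intro e he
    rw [mem_sdiff]
    refine ⟨mem_univ _, fun h2 => hw e h2 ?_⟩
    rw [hZ, mem_filter] at he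
    exact he.2
  have h2 := q_union D Z ((univ \ T) \ Z)
  rw [union_sdiff_of_subset hsub] at h2
  have h3 := q_conn D _ h
  have h4 : (univ \ T).card + T.card = Fintype.card D.E :=
    card_sdiff_add_card_eq_card (subset_univ T)
  have h5 := card_sdiff_add_card_eq_card hsub
  omega

theorem ZA_of_cN (D : Multigraph) (w : D.E → ℕ) (i : ℕ)
    (hi : Fintype.card D.V + i = Fintype.card D.E + 1) (h : 0 < cN D w i) :
    ZeroAcyclic D w := by
  obtain ⟨T, hT, hT2⟩ := exists_ne_zero_of_sum_ne_zero h.ne'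
  rw [mem_filter] at hT
  rw [Finset.prod_ne_zero_iff] at hT2
  exact ZA_of D w T hT.2.2 (by rw [hT.2.1, hi]) hT2

theorem sub_nE (D : Multigraph) (w : D.E → ℕ) : (subdivide D w).nE = ∑ e, w e := by
  show Fintype.card (Σ f : D.E, Fin (w f)) = _
  simp

theorem sub_nV (D : Multigraph) (w : D.E → ℕ) (h : ZeroAcyclic D w) :
    (subdivide D w).nV + Fintype.card D.E = Fintype.card D.V + ∑ e, w e := by
  have h1 : (subdivide D w).nV = Fintype.card (Quot (zeroRel D w)) + ∑ e, (w e - 1) := by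
    show Fintype.card (Quot (zeroRel D w) ⊕ (Σ f : D.E, Fin (w f - 1))) = _
    simp
  have h2 : ∑ e, (w e - 1) + Fintype.card D.E =
      ∑ e, w e + (univ.filter fun e : D.E => w e = 0).card := by
    rw [card_filter, ← sum_add_distrib]
    have : Fintype.card D.E = ∑ e : D.E, 1 := by simp
    rw [this, ← sum_add_distrib]
    refine sum_congr rfl fun e _ => ?_
    split_ifs <;> omega
  unfold ZeroAcyclic at h
  omega

theorem card_prism : Fintype.card prism.V = 6 ∧ Fintype.card prism.E = 9 := by
  constructor
  · show Fintype.card (Fin 3 × Bool) = 6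
    simp
  · show Fintype.card ((Fin 3 × Bool) ⊕ Fin 3) = 9
    simp

theorem card_K33 : Fintype.card K33.V = 6 ∧ Fintype.card K33.E = 9 := by
  constructor
  · show Fintype.card (Fin 3 ⊕ Fin 3) = 6
    simp
  · show Fintype.card (Fin 3 × Fin 3) = 9
    simp

def pE (i : Fin 3) (b : Bool) : prism.E := Sum.inl (i, b)
def pR (i : Fin 3) : prism.E := Sum.inr i
def pV (i : Fin 3) (b : Bool) : prism.V := (i, b)

theorem pE_inj (i j : Fin 3) (b : Bool) (h : i ≠ j) : pE i b ≠ pE j b := by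
  intro h2
  have := Sum.inl.inj h2
  exact h (Prod.mk.inj this).1

theorem prism_pos (w : prism.E → ℕ) (h : ZeroAcyclic prism w) (b : Bool) :
    ∃ i : Fin 3, w (pE i b) ≠ 0 := by
  by_contra hcon
  push Not at hcon
  have h0 : Fintype.card (Quot (zeroRel prism w)) =
    Fintype.card (Quot (eRel prism (univ.filter fun e => w e = 0))) := by
    rw [zeroRel_eq]
  unfold ZeroAcyclic at h
  rw [h0] at h
  set Z : Finset prism.E := univ.filter fun e => w e = 0 with hZ
  have hm : ∀ i : Fin 3, pE i b ∈ Z := by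
    intro i; exact mem_filter.2 ⟨mem_univ _, hcon i⟩
  set Z' := Z.erase (pE 2 b) with hZ'
  have h1 := q_low prism Z'
  have h2 : Z'.card + 1 = Z.card := card_erase_add_one (hm 2)
  have h3 : Fintype.card (Quot (eRel prism Z')) ≤ Fintype.card (Quot (eRel prism Z)) := by
    refine Fintype.card_le_of_surjective (Quot.lift (Quot.mk (eRel prism Z')) ?_) ?_
    · rintro x y ⟨e, he, rfl, rfl⟩
      by_cases h4 : e = (pE 2 b)
      · subst h4
        have k0 : Quot.mk (eRel prism Z') (pV 0 b) =
            Quot.mk (eRel prism Z') (pV 1 b) := by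
          refine Quot.sound ⟨pE 0 b, ?_, rfl, rfl⟩
          exact mem_erase.2 ⟨pE_inj _ _ _ (by decide), hm 0⟩
        have k1 : Quot.mk (eRel prism Z') (pV 1 b) =
            Quot.mk (eRel prism Z') (pV 2 b) := by
          refine Quot.sound ⟨pE 1 b, ?_, rfl, rfl⟩
          exact mem_erase.2 ⟨pE_inj _ _ _ (by decide), hm 1⟩
        exact (k0.trans k1).symm
      · exact Quot.sound ⟨e, mem_erase.2 ⟨h4, he⟩, rfl, rfl⟩
    · intro y
      induction y using Quot.ind with
      | mk a => exact ⟨Quot.mk _ a, rfl⟩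
  omega


def goodB (s t : Fin 9 → Fin 6) (l : List (Fin 9)) : Bool :=
  (List.range 64).all fun k => k == 0 || (k == 63 ||
    (List.finRange 9).any fun e => !(l.contains e) && (k.testBit (s e).val != k.testBit (t e).val))

theorem goodB_iff (D : Multigraph) (eE : Fin 9 ≃ D.E) (eV : Fin 6 ≃ D.V) (s t : Fin 9 → Fin 6)
    (hs : ∀ i, D.src (eE i) = eV (s i)) (ht : ∀ i, D.tgt (eE i) = eV (t i)) (l : List (Fin 9)) :
    D.ConnOn (univ.filter fun e => eE.symm e ∉ l) ↔ goodB s t l = true := by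
  rw [conn_iff]
  simp only [goodB, List.all_eq_true, List.mem_range, Bool.or_eq_true, beq_iff_eq,
    List.any_eq_true, List.mem_finRange, true_and, Bool.and_eq_true, Bool.not_eq_true',
    bne_iff_ne, ne_eq, List.contains_eq_mem, decide_eq_false_iff_not]
  constructor
  · intro H k hk
    by_contra hcon
    push Not at hcon
    obtain ⟨h0, h63, he⟩ := hcon
    have hall := H (fun v => k.testBit (eV.symm v).val = true) (by
      intro e h
      rw [mem_filter] at h
      have := he (eE.symm e) h.2
      have h1 := hs (eE.symm e)
      have h2 := ht (eE.symm e)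
      rw [Equiv.apply_symm_apply] at h1 h2
      rw [h1, h2, Equiv.symm_apply_apply, Equiv.symm_apply_apply, this])
    have hc : ∀ a b : Fin 6, k.testBit a.val = true → k.testBit b.val = true := by
      intro a b h
      have := hall (eV a) (eV b) (by simpa using h)
      simpa using this
    by_cases hz : ∃ a : Fin 6, k.testBit a.val = true
    · obtain ⟨a, ha⟩ := hz
      apply h63
      apply Nat.eq_of_testBit_eq
      intro i
      by_cases hi : i < 6
      · rw [hc a ⟨i, hi⟩ ha]
        interval_cases i <;> rfl
      · have h1 : k < 2 ^ i := lt_of_lt_of_le hk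
          (by calc 64 = 2 ^ 6 := rfl
                _ ≤ 2 ^ i := Nat.pow_le_pow_right (by norm_num) (by omega))
        have h2 : 63 < 2 ^ i := lt_of_lt_of_le (by norm_num : 63 < 2 ^ 6)
          (Nat.pow_le_pow_right (by norm_num) (by omega))
        rw [Nat.testBit_lt_two_pow h1, Nat.testBit_lt_two_pow h2]
    · push Not at hz
      apply h0
      apply Nat.eq_of_testBit_eq
      intro i
      by_cases hi : i < 6
      · have := hz ⟨i, hi⟩
        simpa using this
      · have h1 : k < 2 ^ i := lt_of_lt_of_le hk
          (by calc 64 = 2 ^ 6 := rfl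
                _ ≤ 2 ^ i := Nat.pow_le_pow_right (by norm_num) (by omega))
        rw [Nat.testBit_lt_two_pow h1]; simp
  · intro H c hc u v hu
    set k := Nat.ofBits (fun i : Fin 6 => decide (c (eV i))) with hk
    have hb : ∀ i : Fin 6, k.testBit i.val = decide (c (eV i)) := by
      intro i
      rw [hk, Nat.testBit_ofBits_lt _ _ i.2]
    have hlt : k < 64 := Nat.ofBits_lt_two_pow _
    rcases H k hlt with h | h | ⟨e, he, h⟩
    · have := hb (eV.symm u)
      rw [h] at this
      simp [hu] at this
    · have := hb (eV.symm v)
      rw [h] at this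
      have h2 : ∀ i : Fin 6, Nat.testBit 63 i.val = true := by decide
      rw [h2] at this
      simpa using this.symm
    · exfalso
      apply h
      rw [hb, hb, ← hs, ← ht]
      have := hc (eE e) (by rw [mem_filter]; simpa using he)
      simp only [this]

theorem sum_map_filter {α : Type} (L : List α) (p : α → Bool) (f : α → ℕ) :
    (L.map (fun x => if p x = true then f x else 0)).sum = ((L.filter p).map f).sum := by
  induction L with
  | nil => rfl
  | cons a L ih =>
    by_cases h : p a = true
    · simp [h, ih]
    · simp [h, ih]

theorem cN_eval (D : Multigraph) (eE : Fin 9 ≃ D.E) (eV : Fin 6 ≃ D.V) (s t : Fin 9 → Fin 6)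
    (hs : ∀ i, D.src (eE i) = eV (s i)) (ht : ∀ i, D.tgt (eE i) = eV (t i)) (w : D.E → ℕ)
    (i : ℕ) :
    cN D w i = ((((List.finRange 9).sublistsLen i).filter (goodB s t)).map
      (fun l => (l.map (fun e => w (eE e))).prod)).sum := by
  set g : Multiset (Fin 9) → ℕ := fun m =>
    if D.ConnOn (univ.filter fun e => eE.symm e ∉ m) then (m.map (fun e => w (eE e))).prod else 0
    with hg
  have h1 : cN D w i = ∑ T ∈ powersetCard i (univ : Finset (Fin 9)), g T.val := by
    rw [cN, sum_filter]
    have : ∀ T : Finset D.E, (if T.card = i ∧ D.ConnOn (univ \ T) then ∏ e ∈ T, w e else 0) =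
        if T.card = i then (if D.ConnOn (univ \ T) then ∏ e ∈ T, w e else 0) else 0 := by
      intro T
      rw [ite_and]
    simp only [this]
    have hp : powersetCard i (univ : Finset (Fin 9)) =
        (univ : Finset (Finset (Fin 9))).filter (fun T => T.card = i) := by
      ext T; simp [mem_powersetCard]
    rw [hp, sum_filter]
    symm
    refine Fintype.sum_equiv (Equiv.finsetCongr eE) _ _ ?_
    intro T
    have e1 : (Equiv.finsetCongr eE T).card = T.card := by simp
    have e2 : univ \ (Equiv.finsetCongr eE T) = univ.filter (fun e => eE.symm e ∉ T.val) := by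
      ext e
      simp [Equiv.finsetCongr_apply, mem_map_equiv]
    have e3 : ∏ e ∈ Equiv.finsetCongr eE T, w e = (T.val.map (fun e => w (eE e))).prod := by
      simp [Equiv.finsetCongr_apply]
    rw [e1, e2, e3]
  rw [h1]
  have h2 : ∑ T ∈ powersetCard i (univ : Finset (Fin 9)), g T.val =
      (((univ : Finset (Fin 9)).val.powersetCard i).map g).sum := by
    rw [← Finset.map_val_val_powersetCard, Multiset.map_map]
    rfl
  rw [h2]
  have h3 : (univ : Finset (Fin 9)).val = (List.finRange 9 : Multiset (Fin 9)) := rfl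
  rw [h3, Multiset.powersetCard_coe, Multiset.map_coe, Multiset.sum_coe, List.map_map,
    ← sum_map_filter]
  congr 2
  funext l
  simp only [Function.comp, hg, Multiset.mem_coe, Multiset.map_coe, Multiset.prod_coe]
  exact if_congr (goodB_iff D eE eV s t hs ht l) rfl rfl

/-- a1 a2 a3 b1 b2 b3 r1 r2 r3; vertices t1 t2 t3 b1 b2 b3 -/
def sP : Fin 9 → Fin 6 := ![0, 1, 2, 3, 4, 5, 0, 1, 2]
def tP : Fin 9 → Fin 6 := ![1, 2, 0, 4, 5, 3, 3, 4, 5]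
/-- K33 twisted: parts t1 t3 b2 / t2 b1 b3. -/
def sK : Fin 9 → Fin 6 := ![0, 2, 0, 4, 4, 2, 0, 4, 2]
def tK : Fin 9 → Fin 6 := ![1, 1, 5, 3, 5, 3, 3, 1, 5]



def lsum (v : Fin 9 → ℕ) (L : List (List (Fin 9))) : ℕ := (L.map (fun l => (l.map v).prod)).sum

def l2 : List (List (Fin 9)) :=
  [[7, 8], [6, 8], [6, 7], [5, 8], [5, 7], [5, 6], [4, 8], [4, 7], [4, 6], [4, 5], [3, 8], [3,
    7], [3, 6], [3, 5], [3, 4], [2, 8], [2, 7], [2, 6], [2, 5], [2, 4], [2, 3], [1, 8], [1, 7],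
    [1, 6], [1, 5], [1, 4], [1, 3], [1, 2], [0, 8], [0, 7], [0, 6], [0, 5], [0, 4], [0, 3], [0,
    2], [0, 1]]

def l3P : List (List (Fin 9)) :=
  [[5, 7, 8], [5, 6, 8], [5, 6, 7], [4, 7, 8], [4, 6, 8], [4, 6, 7], [4, 5, 7], [4, 5, 6], [3,
    7, 8], [3, 6, 8], [3, 6, 7], [3, 5, 8], [3, 5, 7], [3, 4, 8], [3, 4, 6], [3, 4, 5], [2, 7,
    8], [2, 6, 8], [2, 6, 7], [2, 5, 8], [2, 5, 7], [2, 5, 6], [2, 4, 8], [2, 4, 7], [2, 4, 6],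
    [2, 4, 5], [2, 3, 8], [2, 3, 7], [2, 3, 6], [2, 3, 5], [2, 3, 4], [1, 7, 8], [1, 6, 8], [1,
    6, 7], [1, 5, 8], [1, 5, 7], [1, 5, 6], [1, 4, 8], [1, 4, 7], [1, 4, 6], [1, 4, 5], [1, 3,
    8], [1, 3, 7], [1, 3, 6], [1, 3, 5], [1, 3, 4], [1, 2, 7], [1, 2, 6], [1, 2, 5], [1, 2, 4],
    [1, 2, 3], [0, 7, 8], [0, 6, 8], [0, 6, 7], [0, 5, 8], [0, 5, 7], [0, 5, 6], [0, 4, 8], [0,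
    4, 7], [0, 4, 6], [0, 4, 5], [0, 3, 8], [0, 3, 7], [0, 3, 6], [0, 3, 5], [0, 3, 4], [0, 2,
    8], [0, 2, 7], [0, 2, 5], [0, 2, 4], [0, 2, 3], [0, 1, 8], [0, 1, 6], [0, 1, 5], [0, 1, 4],
    [0, 1, 3], [0, 1, 2]]

def l3K : List (List (Fin 9)) :=
  [[6, 7, 8], [5, 7, 8], [5, 6, 8], [5, 6, 7], [4, 7, 8], [4, 6, 8], [4, 6, 7], [4, 5, 8], [4,
    5, 7], [4, 5, 6], [3, 7, 8], [3, 6, 8], [3, 6, 7], [3, 5, 8], [3, 5, 7], [3, 4, 8], [3, 4,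
    6], [3, 4, 5], [2, 7, 8], [2, 6, 8], [2, 6, 7], [2, 5, 8], [2, 5, 7], [2, 5, 6], [2, 4, 7],
    [2, 4, 6], [2, 4, 5], [2, 3, 8], [2, 3, 7], [2, 3, 6], [2, 3, 5], [2, 3, 4], [1, 7, 8], [1,
    6, 8], [1, 6, 7], [1, 5, 7], [1, 5, 6], [1, 4, 8], [1, 4, 7], [1, 4, 6], [1, 4, 5], [1, 3,
    8], [1, 3, 7], [1, 3, 6], [1, 3, 5], [1, 3, 4], [1, 2, 8], [1, 2, 7], [1, 2, 6], [1, 2, 5],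
    [1, 2, 4], [1, 2, 3], [0, 7, 8], [0, 6, 8], [0, 6, 7], [0, 5, 8], [0, 5, 7], [0, 5, 6], [0,
    4, 8], [0, 4, 7], [0, 4, 6], [0, 4, 5], [0, 3, 8], [0, 3, 7], [0, 3, 6], [0, 3, 5], [0, 3,
    4], [0, 2, 8], [0, 2, 7], [0, 2, 5], [0, 2, 4], [0, 2, 3], [0, 1, 8], [0, 1, 6], [0, 1, 5],
    [0, 1, 4], [0, 1, 3], [0, 1, 2]]

def l4P : List (List (Fin 9)) :=
  [[2, 5, 7, 8], [2, 5, 6, 8], [2, 5, 6, 7], [2, 4, 7, 8], [2, 4, 6, 8], [2, 4, 6, 7], [2, 4, 5,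
    7], [2, 4, 5, 6], [2, 3, 7, 8], [2, 3, 6, 8], [2, 3, 6, 7], [2, 3, 5, 8], [2, 3, 5, 7], [2,
    3, 4, 8], [2, 3, 4, 6], [2, 3, 4, 5], [1, 5, 7, 8], [1, 5, 6, 8], [1, 5, 6, 7], [1, 4, 7,
    8], [1, 4, 6, 8], [1, 4, 6, 7], [1, 4, 5, 7], [1, 4, 5, 6], [1, 3, 7, 8], [1, 3, 6, 8], [1,
    3, 6, 7], [1, 3, 5, 8], [1, 3, 5, 7], [1, 3, 4, 8], [1, 3, 4, 6], [1, 3, 4, 5], [1, 2, 5,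
    7], [1, 2, 5, 6], [1, 2, 4, 7], [1, 2, 4, 6], [1, 2, 3, 7], [1, 2, 3, 6], [1, 2, 3, 5], [1,
    2, 3, 4], [0, 5, 7, 8], [0, 5, 6, 8], [0, 5, 6, 7], [0, 4, 7, 8], [0, 4, 6, 8], [0, 4, 6,
    7], [0, 4, 5, 7], [0, 4, 5, 6], [0, 3, 7, 8], [0, 3, 6, 8], [0, 3, 6, 7], [0, 3, 5, 8], [0,
    3, 5, 7], [0, 3, 4, 8], [0, 3, 4, 6], [0, 3, 4, 5], [0, 2, 5, 8], [0, 2, 5, 7], [0, 2, 4,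
    8], [0, 2, 4, 7], [0, 2, 4, 5], [0, 2, 3, 8], [0, 2, 3, 7], [0, 2, 3, 4], [0, 1, 5, 8], [0,
    1, 5, 6], [0, 1, 4, 8], [0, 1, 4, 6], [0, 1, 4, 5], [0, 1, 3, 8], [0, 1, 3, 6], [0, 1, 3,
    5], [0, 1, 2, 5], [0, 1, 2, 4], [0, 1, 2, 3]]

def l4K : List (List (Fin 9)) :=
  [[5, 6, 7, 8], [4, 6, 7, 8], [4, 5, 7, 8], [4, 5, 6, 8], [3, 6, 7, 8], [3, 5, 7, 8], [3, 4, 6,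
    8], [3, 4, 5, 8], [2, 6, 7, 8], [2, 5, 7, 8], [2, 5, 6, 8], [2, 5, 6, 7], [2, 4, 6, 7], [2,
    4, 5, 7], [2, 4, 5, 6], [2, 3, 6, 8], [2, 3, 6, 7], [2, 3, 5, 8], [2, 3, 5, 7], [2, 3, 4,
    6], [2, 3, 4, 5], [1, 6, 7, 8], [1, 5, 6, 7], [1, 4, 7, 8], [1, 4, 6, 8], [1, 4, 6, 7], [1,
    4, 5, 7], [1, 4, 5, 6], [1, 3, 7, 8], [1, 3, 6, 7], [1, 3, 5, 7], [1, 3, 4, 8], [1, 3, 4,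
    6], [1, 3, 4, 5], [1, 2, 7, 8], [1, 2, 6, 8], [1, 2, 5, 7], [1, 2, 5, 6], [1, 2, 4, 7], [1,
    2, 4, 6], [1, 2, 3, 8], [1, 2, 3, 7], [1, 2, 3, 6], [1, 2, 3, 5], [1, 2, 3, 4], [0, 6, 7,
    8], [0, 5, 6, 8], [0, 5, 6, 7], [0, 4, 7, 8], [0, 4, 6, 7], [0, 4, 5, 8], [0, 4, 5, 7], [0,
    4, 5, 6], [0, 3, 7, 8], [0, 3, 6, 8], [0, 3, 6, 7], [0, 3, 5, 8], [0, 3, 5, 7], [0, 3, 4,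
    8], [0, 3, 4, 6], [0, 3, 4, 5], [0, 2, 7, 8], [0, 2, 5, 8], [0, 2, 5, 7], [0, 2, 4, 7], [0,
    2, 4, 5], [0, 2, 3, 8], [0, 2, 3, 7], [0, 2, 3, 4], [0, 1, 6, 8], [0, 1, 5, 6], [0, 1, 4,
    8], [0, 1, 4, 6], [0, 1, 4, 5], [0, 1, 3, 8], [0, 1, 3, 6], [0, 1, 3, 5], [0, 1, 2, 8], [0,
    1, 2, 5], [0, 1, 2, 4], [0, 1, 2, 3]]

theorem l2P_eq : ((List.finRange 9).sublistsLen 2).filter (goodB sP tP) = l2 := by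
  decide +kernel

theorem l2K_eq : ((List.finRange 9).sublistsLen 2).filter (goodB sK tK) = l2 := by
  decide +kernel

theorem l3P_eq : ((List.finRange 9).sublistsLen 3).filter (goodB sP tP) = l3P := by
  decide +kernel

theorem l3K_eq : ((List.finRange 9).sublistsLen 3).filter (goodB sK tK) = l3K := by
  decide +kernel

theorem l4P_eq : ((List.finRange 9).sublistsLen 4).filter (goodB sP tP) = l4P := by
  decide +kernel

theorem l4K_eq : ((List.finRange 9).sublistsLen 4).filter (goodB sK tK) = l4K := by
  decide +kernel

theorem l1K_eq : ((List.finRange 9).sublistsLen 1).filter (goodB sK tK) =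
    [[8], [7], [6], [5], [4], [3], [2], [1], [0]] := by
  decide +kernel

def e2p (a1 a2 a3 b1 b2 b3 : ℤ) (r1 r2 r3 : ℤ) : ℤ :=
  (a1+b1)*(a2+b2) + (a1+b1)*(a3+b3) + (a2+b2)*(a3+b3) + a1*b1 + a2*b2 + a3*b3
  + (r1+r2+r3)*(a1+b1+a2+b2+a3+b3) + r1*r2+r1*r3+r2*r3

def p3 (a1 a2 a3 b1 b2 b3 : ℤ) (r1 r2 r3 : ℤ) : ℤ :=
  (a1+b1)*(a2+b2)*(a3+b3) + a1*b1*(a2+b2+a3+b3) + a2*b2*(a1+b1+a3+b3) + a3*b3*(a1+b1+a2+b2)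
  + (r1+r2+r3)*(a1*b1+a2*b2+a3*b3)
  + r3*((a1+b1)*(a2+b2+a3+b3) + (a2*b3+b2*a3))
  + r1*((a2+b2)*(a1+b1+a3+b3) + (a1*b3+b1*a3))
  + r2*((a3+b3)*(a1+b1+a2+b2) + (a1*b2+b1*a2))
  + (r1*r2+r1*r3+r2*r3)*(a1+b1+a2+b2+a3+b3)

def k3 (a1 a2 a3 b1 b2 b3 : ℤ) (r1 r2 r3 : ℤ) : ℤ :=
  (a1+b1)*(a2+b2)*(a3+b3) + a1*b1*(a2+b2+a3+b3) + a2*b2*(a1+b1+a3+b3) + a3*b3*(a1+b1+a2+b2)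
  + (r1+r2+r3)*(a1*b1+a2*b2+a3*b3)
  + r3*((a1+b1)*(a2+b2+a3+b3) + (a2*a3+b2*b3))
  + r1*((a2+b2)*(a1+b1+a3+b3) + (a1*b3+b1*a3))
  + r2*((a3+b3)*(a1+b1+a2+b2) + (a1*b2+b1*a2))
  + (r1*r2+r1*r3+r2*r3)*(a1+b1+a2+b2+a3+b3) + r1*r2*r3

def p4 (a1 a2 a3 b1 b2 b3 : ℤ) (r1 r2 r3 : ℤ) : ℤ :=
  a1*b1*((a2+b2)*(a3+b3)) + a2*b2*((a1+b1)*(a3+b3)) + a3*b3*((a1+b1)*(a2+b2))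
  + r3*(a1*b1*(a2+b2+a3+b3) + (a1+b1)*((a2+a3)*(b2+b3)))
  + r1*(a2*b2*(a1+b1+a3+b3) + (a2+b2)*((a1+a3)*(b1+b3)))
  + r2*(a3*b3*(a1+b1+a2+b2) + (a3+b3)*((a1+a2)*(b1+b2)))
  + (r1*r2+r1*r3+r2*r3)*((a1+a2+a3)*(b1+b2+b3))

def k4 (a1 a2 a3 b1 b2 b3 : ℤ) (r1 r2 r3 : ℤ) : ℤ :=
  a1*b1*((a2+b2)*(a3+b3)) + a2*b2*((a1+b1)*(a3+b3)) + a3*b3*((a1+b1)*(a2+b2))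
  + r3*(a1*b1*(a2+b2+a3+b3) + (a1+b1)*((a2+b3)*(b2+a3)))
  + r1*(a2*b2*(a1+b1+a3+b3) + (a2+b2)*((a1+a3)*(b1+b3)))
  + r2*(a3*b3*(a1+b1+a2+b2) + (a3+b3)*((a1+a2)*(b1+b2)))
  + r1*r2*((b3+b1+b2)*(a3+a1+a2)) + r2*r3*((a1+a2+b3)*(b1+b2+a3))
  + r1*r3*((a2+b3+b1)*(b2+a3+a1)) + r1*r2*r3*(a1+b1+a2+b2+a3+b3)

theorem l2_poly (v : Fin 9 → ℕ) : (lsum v l2 : ℤ) =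
    e2p (v 0) (v 1) (v 2) (v 3) (v 4) (v 5) (v 6) (v 7) (v 8) := by
  simp only [lsum, l2, e2p, List.map_cons, List.map_nil, List.sum_cons, List.sum_nil,
    List.prod_cons, List.prod_nil]
  push_cast
  ring

theorem l3P_poly (v : Fin 9 → ℕ) : (lsum v l3P : ℤ) =
    p3 (v 0) (v 1) (v 2) (v 3) (v 4) (v 5) (v 6) (v 7) (v 8) := by
  simp only [lsum, l3P, p3, List.map_cons, List.map_nil, List.sum_cons, List.sum_nil,
    List.prod_cons, List.prod_nil]
  push_cast
  ring

theorem l3K_poly (v : Fin 9 → ℕ) : (lsum v l3K : ℤ) =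
    k3 (v 0) (v 1) (v 2) (v 3) (v 4) (v 5) (v 6) (v 7) (v 8) := by
  simp only [lsum, l3K, k3, List.map_cons, List.map_nil, List.sum_cons, List.sum_nil,
    List.prod_cons, List.prod_nil]
  push_cast
  ring

theorem l4P_poly (v : Fin 9 → ℕ) : (lsum v l4P : ℤ) =
    p4 (v 0) (v 1) (v 2) (v 3) (v 4) (v 5) (v 6) (v 7) (v 8) := by
  simp only [lsum, l4P, p4, List.map_cons, List.map_nil, List.sum_cons, List.sum_nil,
    List.prod_cons, List.prod_nil]
  push_cast
  ring

theorem l4K_poly (v : Fin 9 → ℕ) : (lsum v l4K : ℤ) =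
    k4 (v 0) (v 1) (v 2) (v 3) (v 4) (v 5) (v 6) (v 7) (v 8) := by
  simp only [lsum, l4K, k4, List.map_cons, List.map_nil, List.sum_cons, List.sum_nil,
    List.prod_cons, List.prod_nil]
  push_cast
  ring

theorem sq_ge (y c k : ℤ) (h : y = c + 2 * k) (hc : c = 0 ∨ c = 1 ∨ c = -1) : c ^ 2 ≤ y ^ 2 := by
  have : y ≠ 0 ∨ c = 0 := by omega
  rcases this with h1 | h1
  · have h2 : 0 < y ^ 2 := by positivity
    rcases hc with rfl | rfl | rfl <;> linarith
  · rw [h1]; simpa using sq_nonneg y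

theorem ineq2 (a1 a2 a3 b1 b2 b3 r1 r2 r3 m1 m2 m3 e1 e2 e3 : ℤ)
    (h1 : a1 + b1 = 2 * m1 + e1) (h2 : a2 + b2 = 2 * m2 + e2) (h3 : a3 + b3 = 2 * m3 + e3)
    (he1 : e1 = 0 ∨ e1 = 1) (he2 : e2 = 0 ∨ e2 = 1) (he3 : e3 = 0 ∨ e3 = 1) :
    e2p a1 a2 a3 b1 b2 b3 r1 r2 r3 ≤
      e2p m1 (m2+e2) (m3+e3) (m1+e1) m2 m3 r1 r2 r3 := by
  have d1 := sq_ge (a1 - b1) e1 (m1 - b1) (by linarith) (by tauto)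
  have d2 := sq_ge (a2 - b2) e2 (m2 - b2) (by linarith) (by tauto)
  have d3 := sq_ge (a3 - b3) e3 (m3 - b3) (by linarith) (by tauto)
  obtain rfl : a1 = 2 * m1 + e1 - b1 := by linarith
  obtain rfl : a2 = 2 * m2 + e2 - b2 := by linarith
  obtain rfl : a3 = 2 * m3 + e3 - b3 := by linarith
  unfold e2p
  linarith



theorem key34 (Δ t u v Y ei ej ek : ℤ) (hu : 0 < u) (hv : 0 < v) (hi : ei = 0 ∨ ei = 1)
    (hj : ej = 0 ∨ ej = 1) (hk : ek = 0 ∨ ek = 1) (hY : Y = Δ ^ 2 - (ej + ek - ei) ^ 2)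
    (hs : Δ = ei + ej + ek + 2 * t) :
    (0 ≤ u * v * Y) ∨ (ei = 0 ∧ ej = 1 ∧ ek = 1 ∧ -4 * (u * v) ≤ u * v * Y) := by
  have huv := mul_pos hu hv
  by_cases hc : ei = 0 ∧ ej = 1 ∧ ek = 1
  · right
    refine ⟨hc.1, hc.2.1, hc.2.2, ?_⟩
    have hh : -4 ≤ Y := by
      rw [hY, hc.1, hc.2.1, hc.2.2]
      have := sq_nonneg Δ
      linarith
    have := mul_le_mul_of_nonneg_left hh huv.le
    linarith
  · left
    have := sq_ge Δ (ej + ek - ei) (t + ei) (by linarith) (by omega)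
    have hh : 0 ≤ Y := by linarith
    positivity

theorem big34 (r S u v z : ℤ) (h2 : 2 ≤ S) (hu : 0 < u) (hv : 0 < v) (hz : 0 < z)
    (he : u * v * z = r) : 4 * (u * v) < 4 * (r * S) := by
  have huv := mul_pos hu hv
  have h3 : 2 ≤ z * S := by
    have := mul_le_mul (show (1:ℤ) ≤ z from hz) h2 (by norm_num) hz.le
    linarith
  have h4 := mul_le_mul_of_nonneg_left h3 huv.le
  have : r * S = u * v * (z * S) := by rw [← he]; ring
  linarith

theorem fin34 (T1 T2 T3 t0 r1 r2 r3 S1 S2 S3 e1 e2 e3 m1 m2 m3 : ℤ)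
    (s1 : 0 ≤ S1) (s2 : 0 ≤ S2) (s3 : 0 ≤ S3) (hSS : 0 < S1 + S2 + S3)
    (h1 : S1 = 2 * m1 + e1) (h2 : S2 = 2 * m2 + e2) (h3 : S3 = 2 * m3 + e3)
    (hr1 : 0 < r1) (hr2 : 0 < r2) (hr3 : 0 < r3) (t1 : 0 ≤ t0)
    (k1 : 0 ≤ T1 ∨ (e1 = 0 ∧ e2 = 1 ∧ e3 = 1 ∧ -4 * (r1 * r2) ≤ T1))
    (k2 : 0 ≤ T2 ∨ (e2 = 0 ∧ e1 = 1 ∧ e3 = 1 ∧ -4 * (r2 * r3) ≤ T2))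
    (k3 : 0 ≤ T3 ∨ (e3 = 0 ∧ e1 = 1 ∧ e2 = 1 ∧ -4 * (r1 * r3) ≤ T3)) :
    0 < t0 + T1 + T2 + T3 + 4 * (r1 * r2 * r3 * (S1 + S2 + S3)) := by
  have hRS : 0 < 4 * (r1 * r2 * r3 * (S1 + S2 + S3)) := by positivity
  rcases k1 with k1 | ⟨c1, c2, c3, k1⟩
  · rcases k2 with k2 | ⟨c1, c2, c3, k2⟩
    · rcases k3 with k3 | ⟨c1, c2, c3, k3⟩
      · linarith
      · have hh : 2 ≤ S1 + S2 + S3 := by clear k1 k2 k3 hRS; omega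
        have := big34 _ _ r1 r3 r2 hh hr1 hr3 hr2 rfl
        rw [show r1 * r3 * r2 = r1 * r2 * r3 by ring] at this
        linarith
    · rcases k3 with k3 | ⟨c1', c2', c3', k3⟩
      · have hh : 2 ≤ S1 + S2 + S3 := by clear k1 k2 k3 hRS; omega
        have := big34 _ _ r2 r3 r1 hh hr2 hr3 hr1 rfl
        rw [show r2 * r3 * r1 = r1 * r2 * r3 by ring] at this
        linarith
      · clear k1 k2 k3 hRS; omega
  · rcases k2 with k2 | ⟨c1', c2', c3', k2⟩
    · rcases k3 with k3 | ⟨c1', c2', c3', k3⟩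
      · have hh : 2 ≤ S1 + S2 + S3 := by clear k1 k2 k3 hRS; omega
        have := big34 _ _ r1 r2 r3 hh hr1 hr2 hr3 rfl
        linarith
      · clear k1 k2 k3 hRS; omega
    · clear k1 k2 k3 hRS; omega

set_option maxHeartbeats 2000000 in
theorem ineq34 (a1 a2 a3 b1 b2 b3 r1 r2 r3 m1 m2 m3 e1 e2 e3 : ℤ)
    (h1 : a1 + b1 = 2 * m1 + e1) (h2 : a2 + b2 = 2 * m2 + e2) (h3 : a3 + b3 = 2 * m3 + e3)
    (he1 : e1 = 0 ∨ e1 = 1) (he2 : e2 = 0 ∨ e2 = 1) (he3 : e3 = 0 ∨ e3 = 1)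
    (ha1 : 0 ≤ a1) (ha2 : 0 ≤ a2) (ha3 : 0 ≤ a3) (hb1 : 0 ≤ b1) (hb2 : 0 ≤ b2) (hb3 : 0 ≤ b3)
    (hr1 : 0 < r1) (hr2 : 0 < r2) (hr3 : 0 < r3) (hS : 0 < a1 + a2 + a3) :
    p3 a1 a2 a3 b1 b2 b3 r1 r2 r3 <
      k3 m1 (m2+e2) (m3+e3) (m1+e1) m2 m3 r1 r2 r3 ∧
    p4 a1 a2 a3 b1 b2 b3 r1 r2 r3 <
      k4 m1 (m2+e2) (m3+e3) (m1+e1) m2 m3 r1 r2 r3 := by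
  obtain ⟨S1, hS1⟩ : ∃ S, S = a1 + b1 := ⟨_, rfl⟩
  obtain ⟨S2, hS2⟩ : ∃ S, S = a2 + b2 := ⟨_, rfl⟩
  obtain ⟨S3, hS3⟩ : ∃ S, S = a3 + b3 := ⟨_, rfl⟩
  have s1 : 0 ≤ S1 := by linarith
  have s2 : 0 ≤ S2 := by linarith
  have s3 : 0 ≤ S3 := by linarith
  obtain ⟨D1, hD1⟩ : ∃ D, D = (a1 - b1) ^ 2 - e1 ^ 2 := ⟨_, rfl⟩
  obtain ⟨D2, hD2⟩ : ∃ D, D = (a2 - b2) ^ 2 - e2 ^ 2 := ⟨_, rfl⟩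
  obtain ⟨D3, hD3⟩ : ∃ D, D = (a3 - b3) ^ 2 - e3 ^ 2 := ⟨_, rfl⟩
  obtain ⟨X1, hX1⟩ : ∃ D, D = (a2 - b2 + (a3 - b3)) ^ 2 - (e2 - e3) ^ 2 := ⟨_, rfl⟩
  obtain ⟨X2, hX2⟩ : ∃ D, D = (a1 - b1 + (a3 - b3)) ^ 2 - (e1 - e3) ^ 2 := ⟨_, rfl⟩
  obtain ⟨X3, hX3⟩ : ∃ D, D = (a1 - b1 + (a2 - b2)) ^ 2 - (e1 - e2) ^ 2 := ⟨_, rfl⟩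
  obtain ⟨Δ, hΔ⟩ : ∃ D, D = (a1 - b1 + (a2 - b2) + (a3 - b3)) := ⟨_, rfl⟩
  obtain ⟨Y1, hY1⟩ : ∃ D, D = Δ ^ 2 - (e2 + e3 - e1) ^ 2 := ⟨_, rfl⟩
  obtain ⟨Y2, hY2⟩ : ∃ D, D = Δ ^ 2 - (e1 + e3 - e2) ^ 2 := ⟨_, rfl⟩
  obtain ⟨Y3, hY3⟩ : ∃ D, D = Δ ^ 2 - (e1 + e2 - e3) ^ 2 := ⟨_, rfl⟩
  have d1 : 0 ≤ D1 := by
    have := sq_ge (a1 - b1) e1 (m1 - b1) (by linarith) (by tauto)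
    linarith
  have d2 : 0 ≤ D2 := by
    have := sq_ge (a2 - b2) e2 (m2 - b2) (by linarith) (by tauto)
    linarith
  have d3 : 0 ≤ D3 := by
    have := sq_ge (a3 - b3) e3 (m3 - b3) (by linarith) (by tauto)
    linarith
  have x1 : 0 ≤ X1 := by
    have := sq_ge (a2 - b2 + (a3 - b3)) (e2 - e3) (m2 - b2 + m3 - b3 + e3) (by linarith)
      (by omega)
    linarith
  have x2 : 0 ≤ X2 := by
    have := sq_ge (a1 - b1 + (a3 - b3)) (e1 - e3) (m1 - b1 + m3 - b3 + e3) (by linarith)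
      (by omega)
    linarith
  have x3 : 0 ≤ X3 := by
    have := sq_ge (a1 - b1 + (a2 - b2)) (e1 - e2) (m1 - b1 + m2 - b2 + e2) (by linarith)
      (by omega)
    linarith
  have i3 : 4 * (k3 m1 (m2+e2) (m3+e3) (m1+e1) m2 m3 r1 r2 r3 - p3 a1 a2 a3 b1 b2 b3 r1 r2 r3)
      = D1 * (S2 + S3) + D2 * (S1 + S3) + D3 * (S1 + S2) + r3 * (X1 + D1) + r1 * (X2 + D2)
        + r2 * (X3 + D3) + 4 * (r1 * r2 * r3) := by
    obtain rfl : a1 = 2 * m1 + e1 - b1 := by linarith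
    obtain rfl : a2 = 2 * m2 + e2 - b2 := by linarith
    obtain rfl : a3 = 2 * m3 + e3 - b3 := by linarith
    subst hS1 hS2 hS3 hD1 hD2 hD3 hX1 hX2 hX3
    unfold k3 p3
    ring
  have i4 : 4 * (k4 m1 (m2+e2) (m3+e3) (m1+e1) m2 m3 r1 r2 r3 - p4 a1 a2 a3 b1 b2 b3 r1 r2 r3)
      = D1 * (S2 * S3) + D2 * (S1 * S3) + D3 * (S1 * S2)
        + r3 * (D1 * (S2 + S3) + S1 * X1) + r1 * (D2 * (S1 + S3) + S2 * X2)
        + r2 * (D3 * (S1 + S2) + S3 * X3)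
        + r1 * r2 * Y1 + r2 * r3 * Y2 + r1 * r3 * Y3 + 4 * (r1 * r2 * r3 * (S1 + S2 + S3)) := by
    obtain rfl : a1 = 2 * m1 + e1 - b1 := by linarith
    obtain rfl : a2 = 2 * m2 + e2 - b2 := by linarith
    obtain rfl : a3 = 2 * m3 + e3 - b3 := by linarith
    subst hY1 hY2 hY3 hΔ hS1 hS2 hS3 hD1 hD2 hD3 hX1 hX2 hX3
    unfold k4 p4
    ring
  have hR : 0 < r1 * r2 * r3 := by positivity
  constructor
  · have t1 : 0 ≤ D1 * (S2 + S3) + D2 * (S1 + S3) + D3 * (S1 + S2) + r3 * (X1 + D1)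
      + r1 * (X2 + D2) + r2 * (X3 + D3) := by positivity
    linarith
  · have t1 : 0 ≤ D1 * (S2 * S3) + D2 * (S1 * S3) + D3 * (S1 * S2)
        + r3 * (D1 * (S2 + S3) + S1 * X1) + r1 * (D2 * (S1 + S3) + S2 * X2)
        + r2 * (D3 * (S1 + S2) + S3 * X3) := by positivity
    have hSS : 0 < S1 + S2 + S3 := by linarith
    have par : Δ = (e1 + e2 + e3) + 2 * (m1 - b1 + m2 - b2 + m3 - b3) := by linarith
    have q1 := key34 Δ (m1 - b1 + m2 - b2 + m3 - b3) r1 r2 Y1 e1 e2 e3 hr1 hr2 he1 he2 he3 hY1 (by rw [par])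
    have q2 := key34 Δ (m1 - b1 + m2 - b2 + m3 - b3) r2 r3 Y2 e2 e1 e3 hr2 hr3 he2 he1 he3 hY2 (by rw [par]; ring)
    have q3 := key34 Δ (m1 - b1 + m2 - b2 + m3 - b3) r1 r3 Y3 e3 e1 e2 hr1 hr3 he3 he1 he2 hY3 (by rw [par]; ring)
    have := fin34 _ _ _ _ r1 r2 r3 S1 S2 S3 e1 e2 e3 m1 m2 m3 s1 s2 s3 hSS
      (by rw [hS1, h1]) (by rw [hS2, h2]) (by rw [hS3, h3]) hr1 hr2 hr3 t1 q1 q2 q3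
    rw [← i4] at this
    linarith


theorem sumE (D : Multigraph) (eE : Fin 9 ≃ D.E) (w : D.E → ℕ) (v : Fin 9 → ℕ)
    (h : ∀ i, w (eE i) = v i) :
    ∑ e, w e = v 0 + v 1 + v 2 + v 3 + v 4 + v 5 + v 6 + v 7 + v 8 := by
  rw [← Equiv.sum_comp eE]
  simp only [h, Fin.sum_univ_succ, Fin.sum_univ_zero]
  simp [Fin.succ]
  ring

def eP : Fin 9 ≃ prism.E := Equiv.ofBijective
  (![pE 0 false, pE 1 false, pE 2 false, pE 0 true, pE 1 true, pE 2 true, pR 0, pR 1, pR 2] :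
    Fin 9 → prism.E) (by
  show Function.Bijective (![Sum.inl (0, false), Sum.inl (1, false), Sum.inl (2, false),
    Sum.inl (0, true), Sum.inl (1, true), Sum.inl (2, true), Sum.inr 0, Sum.inr 1, Sum.inr 2] :
    Fin 9 → (Fin 3 × Bool) ⊕ Fin 3)
  rw [Fintype.bijective_iff_injective_and_card]
  refine ⟨?_, by simp⟩
  unfold Function.Injective
  decide)

def eVP0 : Fin 6 ≃ Fin 3 × Bool := Equiv.ofBijective
  (![(0, false), (1, false), (2, false), (0, true), (1, true), (2, true)] :
    Fin 6 → Fin 3 × Bool) (by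
  rw [Fintype.bijective_iff_injective_and_card]
  refine ⟨?_, by simp⟩
  unfold Function.Injective
  decide)

def eVP : Fin 6 ≃ prism.V := eVP0

def eK0 : Fin 9 ≃ Fin 3 × Fin 3 := Equiv.ofBijective
  (![(0, 0), (1, 0), (0, 2), (2, 1), (2, 2), (1, 1), (0, 1), (2, 0), (1, 2)] :
    Fin 9 → Fin 3 × Fin 3) (by
  rw [Fintype.bijective_iff_injective_and_card]
  refine ⟨?_, by simp⟩
  unfold Function.Injective
  decide)

def eK : Fin 9 ≃ K33.E := eK0

def eVK0 : Fin 6 ≃ Fin 3 ⊕ Fin 3 := Equiv.ofBijective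
  (![Sum.inl 0, Sum.inr 0, Sum.inl 1, Sum.inr 1, Sum.inl 2, Sum.inr 2] :
    Fin 6 → Fin 3 ⊕ Fin 3) (by
  rw [Fintype.bijective_iff_injective_and_card]
  refine ⟨?_, by simp⟩
  unfold Function.Injective
  decide)

def eVK : Fin 6 ≃ K33.V := eVK0

theorem hsP : ∀ i, prism.src (eP i) = eVP (sP i) := by
  intro i; fin_cases i <;> rfl
theorem htP : ∀ i, prism.tgt (eP i) = eVP (tP i) := by
  intro i; fin_cases i <;> rfl
theorem hsK : ∀ i, K33.src (eK i) = eVK (sK i) := by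
  intro i; fin_cases i <;> rfl
theorem htK : ∀ i, K33.tgt (eK i) = eVK (tK i) := by
  intro i; fin_cases i <;> rfl

theorem l0K_eq : ((List.finRange 9).sublistsLen 0).filter (goodB sK tK) = [[]] := by
  decide +kernel

theorem exists_K (w : prism.E → ℕ) (hZ : ZeroAcyclic prism w) (hr : ∀ i, 0 < w (pR i)) :
    ∃ w' : K33.E → ℕ, ZeroAcyclic K33 w' ∧ ∑ e, w' e = ∑ e, w e ∧ cN K33 w' 0 = 1 ∧
      cN K33 w' 1 = ∑ e, w' e ∧ cN prism w 2 ≤ cN K33 w' 2 ∧ cN prism w 3 < cN K33 w' 3 ∧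
      cN prism w 4 < cN K33 w' 4 := by
  obtain ⟨v, hv⟩ : ∃ v : Fin 9 → ℕ, v = fun i => w (eP i) := ⟨_, rfl⟩
  obtain ⟨e1, he1⟩ : ∃ x, x = (v 0 + v 3) % 2 := ⟨_, rfl⟩
  obtain ⟨e2, he2⟩ : ∃ x, x = (v 1 + v 4) % 2 := ⟨_, rfl⟩
  obtain ⟨e3, he3⟩ : ∃ x, x = (v 2 + v 5) % 2 := ⟨_, rfl⟩
  obtain ⟨m1, hm1⟩ : ∃ x, x = (v 0 + v 3) / 2 := ⟨_, rfl⟩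
  obtain ⟨m2, hm2⟩ : ∃ x, x = (v 1 + v 4) / 2 := ⟨_, rfl⟩
  obtain ⟨m3, hm3⟩ : ∃ x, x = (v 2 + v 5) / 2 := ⟨_, rfl⟩
  obtain ⟨u, hu⟩ : ∃ u : Fin 9 → ℕ,
    u = ![m1, m2 + e2, m3 + e3, m1 + e1, m2, m3, v 6, v 7, v 8] := ⟨_, rfl⟩
  have hP : ∀ i, cN prism w i = lsum v (((List.finRange 9).sublistsLen i).filter (goodB sP tP)) := by
    intro i
    rw [cN_eval prism eP eVP sP tP hsP htP w i, hv]; rfl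
  have hK : ∀ i, cN K33 (fun e => u (eK.symm e)) i =
      lsum u (((List.finRange 9).sublistsLen i).filter (goodB sK tK)) := by
    intro i
    rw [cN_eval K33 eK eVK sK tK hsK htK _ i]
    simp only [Equiv.symm_apply_apply]; rfl
  have u0 : u 0 = m1 := by rw [hu]; rfl
  have u1 : u 1 = m2 + e2 := by rw [hu]; rfl
  have u2 : u 2 = m3 + e3 := by rw [hu]; rfl
  have u3 : u 3 = m1 + e1 := by rw [hu]; rfl
  have u4 : u 4 = m2 := by rw [hu]; rfl
  have u5 : u 5 = m3 := by rw [hu]; rfl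
  have u6 : u 6 = v 6 := by rw [hu]; rfl
  have u7 : u 7 = v 7 := by rw [hu]; rfl
  have u8 : u 8 = v 8 := by rw [hu]; rfl
  have sK' := sumE K33 eK (fun e => u (eK.symm e)) u (by intro i; simp)
  have sP' := sumE prism eP w v (by intro i; rw [hv])
  have r1 : 0 < v 6 := by rw [hv]; exact hr 0
  have r2 : 0 < v 7 := by rw [hv]; exact hr 1
  have r3 : 0 < v 8 := by rw [hv]; exact hr 2
  have hS : 0 < v 0 + v 1 + v 2 := by
    obtain ⟨i, hi⟩ := prism_pos w hZ false
    have h0 : v 0 = w (pE 0 false) := by rw [hv]; rfl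
    have h1 : v 1 = w (pE 1 false) := by rw [hv]; rfl
    have h2 : v 2 = w (pE 2 false) := by rw [hv]; rfl
    rw [h0, h1, h2]
    fin_cases i
    · change w (pE 0 false) ≠ 0 at hi; omega
    · change w (pE 1 false) ≠ 0 at hi; omega
    · change w (pE 2 false) ≠ 0 at hi; omega
  have q1 : ((v 0 : ℤ) + v 3) = 2 * m1 + e1 := by omega
  have q2 : ((v 1 : ℤ) + v 4) = 2 * m2 + e2 := by omega
  have q3 : ((v 2 : ℤ) + v 5) = 2 * m3 + e3 := by omega
  have p1 : (e1 : ℤ) = 0 ∨ (e1 : ℤ) = 1 := by omega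
  have p2 : (e2 : ℤ) = 0 ∨ (e2 : ℤ) = 1 := by omega
  have p3 : (e3 : ℤ) = 0 ∨ (e3 : ℤ) = 1 := by omega
  have I2 := ineq2 (v 0) (v 1) (v 2) (v 3) (v 4) (v 5) (v 6) (v 7) (v 8) m1 m2 m3 e1 e2 e3
    q1 q2 q3 p1 p2 p3
  have I34 := ineq34 (v 0) (v 1) (v 2) (v 3) (v 4) (v 5) (v 6) (v 7) (v 8) m1 m2 m3 e1 e2 e3
    q1 q2 q3 p1 p2 p3 (by positivity) (by positivity) (by positivity) (by positivity)
    (by positivity) (by positivity) (by exact_mod_cast r1) (by exact_mod_cast r2)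
    (by exact_mod_cast r3) (by exact_mod_cast hS)
  have g2 : cN prism w 2 ≤ cN K33 (fun e => u (eK.symm e)) 2 := by
    rw [hP, hK, l2P_eq, l2K_eq]
    zify
    rw [l2_poly, l2_poly, u0, u1, u2, u3, u4, u5, u6, u7, u8]
    push_cast
    exact I2
  have g3 : cN prism w 3 < cN K33 (fun e => u (eK.symm e)) 3 := by
    rw [hP, hK, l3P_eq, l3K_eq]
    zify
    rw [l3P_poly, l3K_poly, u0, u1, u2, u3, u4, u5, u6, u7, u8]
    push_cast
    exact I34.1
  have g4 : cN prism w 4 < cN K33 (fun e => u (eK.symm e)) 4 := by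
    rw [hP, hK, l4P_eq, l4K_eq]
    zify
    rw [l4P_poly, l4K_poly, u0, u1, u2, u3, u4, u5, u6, u7, u8]
    push_cast
    exact I34.2
  refine ⟨fun e => u (eK.symm e), ?_, ?_, ?_, ?_, g2, g3, g4⟩
  · refine ZA_of_cN K33 _ 4 ?_ (by omega)
    rw [card_K33.1, card_K33.2]
  · rw [sK', sP']; omega
  · rw [hK, l0K_eq]; rfl
  · rw [hK, l1K_eq, sK']
    simp [lsum]
    ring

theorem conn_of_cG (G : Multigraph) (h : 0 < cG G 0) : G.Connected := by
  obtain ⟨F, hF⟩ := card_pos.1 h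
  have hF := (mem_filter.1 hF).2
  have h2 := hF.2
  rw [card_eq_zero.1 hF.1] at h2
  simpa [Multigraph.Connected] using h2

theorem cG_le (G : Multigraph) (i : ℕ) : cG G i ≤ G.nE.choose i := by
  have := d_add_cG G i
  omega

theorem part2 (n : ℕ) (hn : 2 ≤ n)
    (G : Multigraph) (hG : memG G n (n + 3))
    (w : prism.E → ℕ) (hsub : IsWeakSubdivision G prism w) (hr : ∀ i, 0 < w (pR i)) :
      (∃ G' : Multigraph, memG G' n (n + 3) ∧
        (∃ w' : K33.E → ℕ, IsWeakSubdivision G' K33 w') ∧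
        G'.d 2 ≤ G.d 2 ∧ G'.d 3 < G.d 3 ∧ G'.d 4 < G.d 4) ∧
      (∀ p : ℝ, 0 < p → p < 1 → ¬ pOptimal G n (n + 3) p) := by
  obtain ⟨hZ, ⟨φ⟩⟩ := hsub
  obtain ⟨w', hZ', hs, h0, h1, h2, h3, h4⟩ := exists_K w hZ hr
  have nE' : (subdivide K33 w').nE = n + 3 := by
    rw [sub_nE, hs, ← sub_nE, ← iso_nE φ, hG.2.1]
  have nV' : (subdivide K33 w').nV = n := by
    have := sub_nV K33 w' hZ'
    rw [card_K33.1, card_K33.2, ← sub_nE, nE'] at this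
    omega
  have cG' : ∀ i, cG G i = cN prism w i := fun i => by rw [iso_cG φ, cG_sub]
  have mem' : memG (subdivide K33 w') n (n + 3) := by
    refine ⟨nV', nE', conn_of_cG _ ?_⟩
    rw [cG_sub, h0]; norm_num
  have dd : ∀ i, (subdivide K33 w').d i + cN K33 w' i = G.d i + cN prism w i := by
    intro i
    rw [← cG', ← cG_sub, d_add_cG, d_add_cG, nE', hG.2.1]
  refine ⟨⟨subdivide K33 w', mem', ⟨w', hZ', ⟨⟨Equiv.refl _, Equiv.refl _,
    fun e => Or.inl ⟨rfl, rfl⟩⟩⟩⟩, ?_, ?_, ?_⟩, ?_⟩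
  · have := dd 2; omega
  · have := dd 3; omega
  · have := dd 4; omega
  · intro p hp hp1 hopt
    have := hopt.2 _ mem'
    rw [rel_eq, rel_eq, nE', hG.2.1] at this
    refine absurd this (not_le.2 ?_)
    have hpos : ∀ i, 0 < p ^ (n + 3 - i) * (1 - p) ^ i := fun i =>
      mul_pos (pow_pos hp _) (pow_pos (by linarith) _)
    have hle : ∀ i, cG G i ≤ cG (subdivide K33 w') i := by
      intro i
      match i with
      | 0 =>
        have := cG_le G 0
        rw [cG_sub, h0]; simpa using this
      | 1 =>
        have := cG_le G 1
        rw [cG_sub, h1, hs, ← sub_nE, ← iso_nE φ]; simpa using this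
      | 2 => rw [cG_sub, cG']; exact h2
      | 3 => rw [cG_sub, cG']; exact h3.le
      | 4 => rw [cG_sub, cG']; exact h4.le
      | k + 5 =>
        rw [cG', cN_big]
        · exact Nat.zero_le _
        · rw [card_prism.1, card_prism.2]; omega
    refine sum_lt_sum ?_ ⟨3, mem_range.2 (by omega), ?_⟩
    · intro i _
      exact mul_le_mul_of_nonneg_right (by exact_mod_cast hle i) (hpos i).le
    · refine mul_lt_mul_of_pos_right ?_ (hpos 3)
      rw [cG_sub, cG']
      exact_mod_cast h3


def onCyc (G : Multigraph) (A : G.V → Prop) (e : G.E) : Prop :=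
  A (G.src e) ∧ A (G.tgt e) ∧ ∀ x : G.V → Prop,
    (∀ g, g ≠ e → A (G.src g) → A (G.tgt g) → (x (G.src g) ↔ x (G.tgt g))) →
      (x (G.src e) ↔ x (G.tgt e))

def TwoCyc (G : Multigraph) : Prop :=
  ∃ (A : G.V → Prop) (e g : G.E), onCyc G A e ∧ onCyc G (fun v => ¬ A v) g

theorem onCyc_iso {G H : Multigraph} (φ : MGIso G H) (A : G.V → Prop) (B : H.V → Prop)
    (hAB : ∀ v, B (φ.vMap v) ↔ A v) (e : G.E)
    (h : onCyc G A e) : onCyc H B (φ.eMap e) := by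
  obtain ⟨h1, h2, h3⟩ := h
  have key : ∀ x : H.V → Prop, (∀ g, g ≠ φ.eMap e → B (H.src g) → B (H.tgt g) →
      (x (H.src g) ↔ x (H.tgt g))) → (x (φ.vMap (G.src e)) ↔ x (φ.vMap (G.tgt e))) := by
    intro x hx
    refine h3 (fun v => x (φ.vMap v)) ?_
    intro g hg ha hb
    have := hx (φ.eMap g) (fun h => hg (φ.eMap.injective h))
    rcases φ.ends_eq g with ⟨p, q⟩ | ⟨p, q⟩
    · rw [p, q, hAB, hAB] at this; exact this ha hb
    · rw [p, q, hAB, hAB] at this; exact (this hb ha).symm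
  rcases φ.ends_eq e with ⟨p, q⟩ | ⟨p, q⟩
  · refine ⟨by rw [p, hAB]; exact h1, by rw [q, hAB]; exact h2, ?_⟩
    rw [p, q]; exact key
  · refine ⟨by rw [p, hAB]; exact h2, by rw [q, hAB]; exact h1, ?_⟩
    rw [p, q]; exact fun x hx => (key x hx).symm

theorem TwoCyc_iso {G H : Multigraph} (φ : MGIso G H) (h : TwoCyc G) : TwoCyc H := by
  obtain ⟨A, e, g, he, hg⟩ := h
  exact ⟨fun v => A (φ.vMap.symm v), φ.eMap e, φ.eMap g, onCyc_iso φ A _ (by simp) e he,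
    onCyc_iso φ (fun v => ¬ A v) _ (by simp) g hg⟩

def vIn (D : Multigraph) (w : D.E → ℕ) (v : D.V) : (subdivide D w).V := Sum.inl (Quot.mk _ v)

theorem onCyc_sub (D : Multigraph) (w : D.E → ℕ) (A : (subdivide D w).V → Prop) (f : D.E)
    (j : Fin (w f)) (h : onCyc (subdivide D w) A (eMk D w f j)) :
    onCyc D (fun v => A (vIn D w v)) f := by
  obtain ⟨h1, h2, h3⟩ := h
  change A (chainNode D w f j.val) at h1
  change A (chainNode D w f (j.val + 1)) at h2
  have hj := j.2
  have hsrc : ∀ g, chainNode D w g 0 = vIn D w (D.src g) := fun g => cn_zero D w g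
  have htgt : ∀ g, chainNode D w g (w g) = vIn D w (D.tgt g) := fun g => cn_last D w g
  have all : ∀ k, k ≤ w f → A (chainNode D w f k) := by
    intro k hk
    by_contra hA
    have n1 : k ≠ j.val := by rintro rfl; exact hA h1
    have n2 : k ≠ j.val + 1 := by rintro rfl; exact hA h2
    have e0 : ∀ g, (fun (g:D.E) (m:ℕ) => g = f ∧ ((k < m ∧ m ≤ j.val) ∨ (j.val < m ∧ m < k))) g 0
        ↔ False := by
      intro g; simp
    have e1 : ∀ g, (fun (g:D.E) (m:ℕ) => g = f ∧ ((k < m ∧ m ≤ j.val) ∨ (j.val < m ∧ m < k))) g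
        (w g) ↔ False := by
      intro g; simp only [iff_false]; rintro ⟨rfl, h⟩; omega
    have := h3 (extCol D w (fun _ => False)
      (fun g m => g = f ∧ ((k < m ∧ m ≤ j.val) ∨ (j.val < m ∧ m < k)))) ?_
    · change extCol _ _ _ _ (chainNode D w f j.val) ↔
        extCol _ _ _ _ (chainNode D w f (j.val + 1)) at this
      rw [extCol_node _ _ _ _ _ (e0 f) (e1 f) _ hj.le,
        extCol_node _ _ _ _ _ (e0 f) (e1 f) _ hj] at this
      simp only [true_and] at this
      omega
    · intro y hy
      obtain ⟨g, m, rfl⟩ := eMk_surj D w y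
      show A (chainNode D w g m.val) → A (chainNode D w g (m.val + 1)) →
        (extCol _ _ _ _ (chainNode D w g m.val) ↔ extCol _ _ _ _ (chainNode D w g (m.val + 1)))
      intro a1 a2
      rw [extCol_node _ _ _ _ _ (e0 g) (e1 g) _ m.2.le,
        extCol_node _ _ _ _ _ (e0 g) (e1 g) _ m.2]
      by_cases hg : g = f
      · subst hg
        have q1 : m.val ≠ j.val := by
          intro h; exact hy (by rw [Fin.ext h])
        have q2 : m.val ≠ k := by rintro rfl; exact hA a1
        have q3 : m.val + 1 ≠ k := by rintro rfl; exact hA a2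
        simp only [true_and]
        omega
      · simp [hg]
  refine ⟨?_, ?_, ?_⟩
  · show A (vIn D w (D.src f))
    rw [← hsrc]; exact all 0 (Nat.zero_le _)
  · show A (vIn D w (D.tgt f))
    rw [← htgt]; exact all _ le_rfl
  intro c hc
  have As : A (vIn D w (D.src f)) := by rw [← hsrc]; exact all 0 (Nat.zero_le _)
  have At : A (vIn D w (D.tgt f)) := by rw [← htgt]; exact all _ le_rfl
  have hl : ∀ a b, zeroRel D w a b → (c a ∧ A (vIn D w a)) = (c b ∧ A (vIn D w b)) := by
    rintro a b ⟨e, he, rfl, rfl⟩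
    have hq : vIn D w (D.src e) = vIn D w (D.tgt e) :=
      congrArg Sum.inl (Quot.sound ⟨e, he, rfl, rfl⟩)
    have hne : e ≠ f := by rintro rfl; omega
    have := hc e hne
    simp only [hq] at this ⊢
    apply propext
    tauto
  set C : Quot (zeroRel D w) → Prop := Quot.lift (fun a => c a ∧ A (vIn D w a)) hl with hC
  have Cmk : ∀ a, C (Quot.mk _ a) ↔ (c a ∧ A (vIn D w a)) := fun a => Iff.rfl
  obtain ⟨x, hx⟩ : ∃ x : D.E → ℕ → Prop, x = fun g m =>
    if g = f then (if m ≤ j.val then c (D.src f) else c (D.tgt f))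
    else if (∀ k ≤ m, A (chainNode D w g k)) then c (D.src g)
    else if (∀ k ≤ w g, m ≤ k → A (chainNode D w g k)) then c (D.tgt g) else False := ⟨_, rfl⟩
  have x0 : ∀ g, x g 0 ↔ C (Quot.mk _ (D.src g)) := by
    intro g
    rw [Cmk]
    by_cases hg : g = f
    · subst hg; simp [hx, As]
    · have : x g 0 ↔ if (A (vIn D w (D.src g))) then c (D.src g) else
          if (∀ k ≤ w g, 0 ≤ k → A (chainNode D w g k)) then c (D.tgt g) else False := by
        simp only [hx, if_neg hg, ← hsrc]
        have : (∀ k ≤ 0, A (chainNode D w g k)) ↔ A (chainNode D w g 0) := by simp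
        rw [if_congr this rfl rfl]
      rw [this]
      by_cases ha : A (vIn D w (D.src g))
      · simp [ha]
      · rw [if_neg ha, if_neg]
        · simp [ha]
        · intro h; exact ha (by rw [← hsrc]; exact h 0 (Nat.zero_le _) le_rfl)
  have x1 : ∀ g, x g (w g) ↔ C (Quot.mk _ (D.tgt g)) := by
    intro g
    rw [Cmk]
    by_cases hg : g = f
    · subst hg; simp [hx, At]
    · simp only [hx, if_neg hg]
      split_ifs with q1 q2
      · have a1 : A (vIn D w (D.src g)) := by rw [← hsrc]; exact q1 0 (Nat.zero_le _)
        have a2 : A (vIn D w (D.tgt g)) := by rw [← htgt]; exact q1 _ le_rfl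
        have := hc g hg a1 a2
        tauto
      · have a2 : A (vIn D w (D.tgt g)) := by rw [← htgt]; exact q2 _ le_rfl le_rfl
        tauto
      · have a2 : ¬ A (vIn D w (D.tgt g)) := by
          intro a
          refine q2 (fun k k1 k2 => ?_)
          rw [le_antisymm k1 k2, htgt]; exact a
        tauto
  have := h3 (extCol D w C x) ?_
  · change extCol _ _ _ _ (chainNode D w f j.val) ↔
        extCol _ _ _ _ (chainNode D w f (j.val + 1)) at this
    rw [extCol_node _ _ _ _ _ (x0 f) (x1 f) _ hj.le,
        extCol_node _ _ _ _ _ (x0 f) (x1 f) _ hj] at this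
    simpa [hx] using this
  · intro y hy
    obtain ⟨g, m, rfl⟩ := eMk_surj D w y
    show A (chainNode D w g m.val) → A (chainNode D w g (m.val + 1)) →
        (extCol _ _ _ _ (chainNode D w g m.val) ↔ extCol _ _ _ _ (chainNode D w g (m.val + 1)))
    intro a1 a2
    rw [extCol_node _ _ _ _ _ (x0 g) (x1 g) _ m.2.le,
        extCol_node _ _ _ _ _ (x0 g) (x1 g) _ m.2]
    by_cases hg : g = f
    · subst hg
      have q1 : m.val ≠ j.val := by
        intro h; exact hy (by rw [Fin.ext h])
      simp only [hx, if_true]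
      have : m.val ≤ j.val ↔ m.val + 1 ≤ j.val := by omega
      rw [if_congr this rfl rfl]
    · simp only [hx, if_neg hg]
      have e1 : (∀ k ≤ m.val, A (chainNode D w g k)) ↔
          (∀ k ≤ m.val + 1, A (chainNode D w g k)) := by
        constructor
        · intro h k hk
          rcases Nat.le_succ_iff.1 hk with hk | rfl
          · exact h k hk
          · exact a2
        · intro h k hk; exact h k (by omega)
      have e2 : (∀ k ≤ w g, m.val ≤ k → A (chainNode D w g k)) ↔
          (∀ k ≤ w g, m.val + 1 ≤ k → A (chainNode D w g k)) := by
        constructor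
        · intro h k hk hk'; exact h k hk (by omega)
        · intro h k hk hk'
          rcases hk'.lt_or_eq with q | q
          · exact h k hk q
          · rw [← q]; exact a1
      rw [if_congr e1 rfl (if_congr e2 rfl rfl)]

def kL (i : Fin 3) : K33.V := Sum.inl i
def kR (i : Fin 3) : K33.V := Sum.inr i

theorem onCyc_K33 (A : K33.V → Prop) (f : K33.E) (h : onCyc K33 A f) :
    ∃ i j : Fin 3, i ≠ j ∧ A (kL i) ∧ A (kL j) := by
  obtain ⟨h1, h2, h3⟩ := h
  by_contra hcon
  push Not at hcon
  have := (h3 (fun v => v = kR f.2) ?_).2 rfl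
  · exact absurd this Sum.inl_ne_inr
  · intro g hg ha hb
    have hgi : g.1 = f.1 := by
      by_contra hne
      exact hcon g.1 f.1 hne ha h1
    constructor
    · intro h; exact absurd h Sum.inl_ne_inr
    · intro h
      exact absurd (Prod.ext hgi (Sum.inr.inj h)) hg

theorem K33_not (w : K33.E → ℕ) : ¬ TwoCyc (subdivide K33 w) := by
  rintro ⟨A, e, g, he, hg⟩
  obtain ⟨f, j, rfl⟩ := eMk_surj _ _ e
  obtain ⟨f', j', rfl⟩ := eMk_surj _ _ g
  obtain ⟨a, b, hab, ha, hb⟩ := onCyc_K33 _ _ (onCyc_sub _ _ _ _ _ he)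
  obtain ⟨c, d, hcd, hc, hd⟩ := onCyc_K33 _ _ (onCyc_sub _ _ _ _ _ hg)
  have n1 : a ≠ c := by rintro rfl; exact hc ha
  have n2 : a ≠ d := by rintro rfl; exact hd ha
  have n3 : b ≠ c := by rintro rfl; exact hc hb
  have n4 : b ≠ d := by rintro rfl; exact hd hb
  omega

theorem fin3 : ∀ i : Fin 3, i + 1 ≠ i ∧ i + 1 + 1 ≠ i ∧ i + 1 + 1 + 1 = i := by decide

theorem prism_cyc (w : prism.E → ℕ) (h : ZeroAcyclic prism w) (b : Bool)
    (A : (subdivide prism w).V → Prop)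
    (hA : ∀ i m, m ≤ w (pE i b) → A (chainNode prism w (pE i b) m)) :
    ∃ e, onCyc (subdivide prism w) A e := by
  obtain ⟨i, hi⟩ := prism_pos w h b
  have hp : 0 < w (pE i b) := Nat.pos_of_ne_zero hi
  refine ⟨eMk prism w (pE i b) ⟨0, hp⟩, hA i 0 (Nat.zero_le _), hA i 1 hp, ?_⟩
  intro y hy
  show y (chainNode prism w (pE i b) 0) ↔ y (chainNode prism w (pE i b) 1)
  have st : ∀ k m (hm : m < w (pE k b)), (k ≠ i ∨ m ≠ 0) →
      (y (chainNode prism w (pE k b) m) ↔ y (chainNode prism w (pE k b) (m+1))) := by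
    intro k m hm hn
    refine hy (eMk prism w (pE k b) ⟨m, hm⟩) ?_ (hA k m hm.le) (hA k (m+1) hm)
    intro heq
    by_cases hk : k = i
    · subst hk
      have := eMk_inj _ _ _ _ _ heq
      rw [Fin.mk.injEq] at this
      rcases hn with hn | hn
      · exact hn rfl
      · exact hn this
    · exact pE_inj k i b hk (congrArg (eFst prism w) heq)
  have full : ∀ k, k ≠ i → (y (vIn prism w (pV k b)) ↔ y (vIn prism w (pV (k+1) b))) := by
    intro k hk
    have := chain_const prism w y (pE k b) 0 (w (pE k b)) (Nat.zero_le _)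
      (fun m _ hm => st k m hm (Or.inl hk))
    rwa [cn_zero, cn_last] at this
  have last := chain_const prism w y (pE i b) 1 (w (pE i b)) hp
      (fun m h1 hm => st i m hm (Or.inr (by omega)))
  rw [cn_last] at last
  rw [cn_zero, last]
  change y (vIn prism w (pV i b)) ↔ y (vIn prism w (pV (i+1) b))
  have f1 := full (i+1) (fin3 i).1
  have f2 := full (i+1+1) (fin3 i).2.1
  rw [show i + 1 + 1 + 1 = i from (fin3 i).2.2] at f2
  exact (f1.trans f2).symm

theorem prism_two (w : prism.E → ℕ) (h : ZeroAcyclic prism w) (hr : ∀ i, 0 < w (pR i)) :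
    TwoCyc (subdivide prism w) := by
  have hl : ∀ a b : prism.V, zeroRel prism w a b → (a.2 = false) = (b.2 = false) := by
    rintro a b ⟨e, he, rfl, rfl⟩
    rcases e with ⟨i, b⟩ | i
    · rfl
    · have := hr i
      change w (pR i) = 0 at he
      omega
  let C : Quot (zeroRel prism w) → Prop := Quot.lift (fun a : prism.V => a.2 = false) hl
  let A := extCol prism w C (fun e _ => match e with
    | Sum.inl (i, b) => b = false
    | Sum.inr i => True)
  have key : ∀ b i m, m ≤ w (pE i b) → (A (chainNode prism w (pE i b) m) ↔ b = false) := by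
    intro b i m hm
    exact extCol_node prism w C _ (pE i b) Iff.rfl Iff.rfl m hm
  obtain ⟨e, he⟩ := prism_cyc w h false A (fun i m hm => (key false i m hm).2 rfl)
  obtain ⟨g, hg⟩ := prism_cyc w h true (fun v => ¬ A v)
    (fun i m hm hh => absurd ((key true i m hm).1 hh) (by simp))
  exact ⟨A, e, g, he, hg⟩

theorem part1a (G : Multigraph) (w : prism.E → ℕ) (hsub : IsWeakSubdivision G prism w)
    (hr : ∀ i, 0 < w (pR i)) : ¬ ∃ w' : K33.E → ℕ, IsWeakSubdivision G K33 w' := by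
  rintro ⟨w', _, ⟨ψ⟩⟩
  obtain ⟨hZ, ⟨φ⟩⟩ := hsub
  exact K33_not w' (TwoCyc_iso ψ (TwoCyc_iso φ.symm' (prism_two w hZ hr)))


def innerEq (D D' : Multigraph) (w : D.E → ℕ) (w' : D'.E → ℕ) (φ : D.E ≃ D'.E) (σ : D.E → Bool)
    (hw : ∀ e, w' (φ e) = w e) :
    (Σ f : D.E, Fin (w f - 1)) ≃ (Σ f : D'.E, Fin (w' f - 1)) :=
  Equiv.sigmaCongr φ (fun e => (if σ e then Fin.revPerm else Equiv.refl _ : Equiv.Perm _).trans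
    (finCongr (by rw [hw])))

def edgeEq (D D' : Multigraph) (w : D.E → ℕ) (w' : D'.E → ℕ) (φ : D.E ≃ D'.E) (σ : D.E → Bool)
    (hw : ∀ e, w' (φ e) = w e) :
    (Σ f : D.E, Fin (w f)) ≃ (Σ f : D'.E, Fin (w' f)) :=
  Equiv.sigmaCongr φ (fun e => (if σ e then Fin.revPerm else Equiv.refl _ : Equiv.Perm _).trans
    (finCongr (by rw [hw])))

theorem node_map (D D' : Multigraph) (w : D.E → ℕ) (w' : D'.E → ℕ) (φ : D.E ≃ D'.E)
    (σ : D.E → Bool) (hw : ∀ e, w' (φ e) = w e)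
    (ψ : Quot (zeroRel D w) ≃ Quot (zeroRel D' w'))
    (h1 : ∀ e, ψ (Quot.mk _ (D.src e)) = Quot.mk _ (if σ e then D'.tgt (φ e) else D'.src (φ e)))
    (h2 : ∀ e, ψ (Quot.mk _ (D.tgt e)) = Quot.mk _ (if σ e then D'.src (φ e) else D'.tgt (φ e)))
    (e : D.E) (m : ℕ) (hm : m ≤ w e) :
    Equiv.sumCongr ψ (innerEq D D' w w' φ σ hw) (chainNode D w e m) =
      chainNode D' w' (φ e) (if σ e then w e - m else m) := by
  rcases Nat.eq_zero_or_pos m with rfl | hp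
  · rw [cn_zero, Equiv.sumCongr_apply, Sum.map_inl, h1]
    cases hs : σ e
    · simp [cn_zero]
    · simp only [if_true, Nat.sub_zero, ← hw e, cn_last]
  · rcases hm.lt_or_eq with hl | rfl
    · rw [cn_inner _ _ _ _ ⟨hp, hl⟩, Equiv.sumCongr_apply, Sum.map_inr]
      cases hs : σ e
      · simp only [Bool.false_eq_true, if_false]
        rw [cn_inner _ _ _ _ ⟨hp, by rw [hw]; exact hl⟩]
        congr 1
        simp [innerEq, Equiv.sigmaCongr, hs]
      · simp only [if_true]
        rw [cn_inner _ _ _ _ ⟨by omega, by rw [hw]; omega⟩]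
        congr 1
        simp [innerEq, Equiv.sigmaCongr, hs]
        apply Fin.ext
        simp only [Fin.val_cast, Fin.val_rev]
        omega
    · rw [cn_last, Equiv.sumCongr_apply, Sum.map_inl, h2]
      cases hs : σ e
      · simp only [Bool.false_eq_true, if_false, ← hw e, cn_last]
      · simp [cn_zero]

theorem sub_iso (D D' : Multigraph) (w : D.E → ℕ) (w' : D'.E → ℕ) (φ : D.E ≃ D'.E)
    (σ : D.E → Bool) (hw : ∀ e, w' (φ e) = w e)
    (ψ : Quot (zeroRel D w) ≃ Quot (zeroRel D' w'))
    (h1 : ∀ e, ψ (Quot.mk _ (D.src e)) = Quot.mk _ (if σ e then D'.tgt (φ e) else D'.src (φ e)))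
    (h2 : ∀ e, ψ (Quot.mk _ (D.tgt e)) = Quot.mk _ (if σ e then D'.src (φ e) else D'.tgt (φ e))) :
    IsIso (subdivide D w) (subdivide D' w') := by
  refine ⟨⟨Equiv.sumCongr ψ (innerEq D D' w w' φ σ hw), edgeEq D D' w w' φ σ hw, ?_⟩⟩
  intro y
  obtain ⟨e, m, rfl⟩ := eMk_surj D w y
  have hm := m.2
  have n1 := node_map D D' w w' φ σ hw ψ h1 h2 e m.val m.2.le
  have n2 := node_map D D' w w' φ σ hw ψ h1 h2 e (m.val + 1) m.2
  cases hs : σ e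
  · left
    rw [hs] at n1 n2
    have hv : edgeEq D D' w w' φ σ hw (⟨e, m⟩ : Σ f : D.E, Fin (w f)) =
        ⟨φ e, ⟨m.val, by rw [hw]; exact hm⟩⟩ := by
      simp [edgeEq, Equiv.sigmaCongr, hs]
      rfl
    constructor
    · refine Eq.trans ?_ n1.symm
      exact congrArg (subdivide D' w').src hv
    · refine Eq.trans ?_ n2.symm
      exact congrArg (subdivide D' w').tgt hv
  · right
    rw [hs] at n1 n2
    have hv : edgeEq D D' w w' φ σ hw (⟨e, m⟩ : Σ f : D.E, Fin (w f)) =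
        ⟨φ e, ⟨w e - (m.val + 1), by rw [hw]; omega⟩⟩ := by
      simp [edgeEq, Equiv.sigmaCongr, hs]
      apply Fin.ext
      simp only [Fin.val_cast, Fin.val_rev]
    constructor
    · refine Eq.trans ?_ n2.symm
      exact congrArg (subdivide D' w').src hv
    · refine Eq.trans ?_ n1.symm
      refine (congrArg (subdivide D' w').tgt hv).trans ?_
      show chainNode D' w' (φ e) (w e - (m.val + 1) + 1) = chainNode D' w' (φ e) (w e - m.val)
      rw [show w e - (m.val + 1) + 1 = w e - m.val by omega]

theorem MGIso.trans' {G H K : Multigraph} (φ : IsIso G H) (ψ : IsIso H K) : IsIso G K := by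
  obtain ⟨φ⟩ := φ
  obtain ⟨ψ⟩ := ψ
  refine ⟨⟨φ.vMap.trans ψ.vMap, φ.eMap.trans ψ.eMap, ?_⟩⟩
  intro e
  simp only [Equiv.trans_apply]
  rcases φ.ends_eq e with ⟨a, b⟩ | ⟨a, b⟩ <;> rcases ψ.ends_eq (φ.eMap e) with ⟨c, d⟩ | ⟨c, d⟩ <;>
    rw [c, d, a, b] <;> simp

/-- transfer of a weak subdivision along a vertex bijection and an edge bijection -/
theorem transfer (D D' : Multigraph) (w : D.E → ℕ) (w' : D'.E → ℕ) (φ : D.E ≃ D'.E)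
    (σ : D.E → Bool) (hw : ∀ e, w' (φ e) = w e) (f : D.V ≃ D'.V) (near : D'.V → D'.V → Prop)
    (hn1 : ∀ a b, near a b → (Quot.mk (zeroRel D' w') a) = Quot.mk _ b)
    (hn2 : ∀ a b, near a b → (Quot.mk (zeroRel D w) (f.symm a)) = Quot.mk _ (f.symm b))
    (h1 : ∀ e, near (f (D.src e)) (if σ e then D'.tgt (φ e) else D'.src (φ e)))
    (h2 : ∀ e, near (f (D.tgt e)) (if σ e then D'.src (φ e) else D'.tgt (φ e)))
    (hZ : ZeroAcyclic D w) :
    ZeroAcyclic D' w' ∧ IsIso (subdivide D w) (subdivide D' w') := by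
  have zq : ∀ e, w e = 0 → (Quot.mk (zeroRel D w) (D.src e)) = Quot.mk _ (D.tgt e) :=
    fun e he => Quot.sound ⟨e, he, rfl, rfl⟩
  have zq' : ∀ e, w' e = 0 → (Quot.mk (zeroRel D' w') (D'.src e)) = Quot.mk _ (D'.tgt e) :=
    fun e he => Quot.sound ⟨e, he, rfl, rfl⟩
  have l1 : ∀ a b, zeroRel D w a b → Quot.mk (zeroRel D' w') (f a) = Quot.mk _ (f b) := by
    rintro a b ⟨e, he, rfl, rfl⟩
    rw [hn1 _ _ (h1 e), hn1 _ _ (h2 e)]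
    have := zq' (φ e) (by rw [hw, he])
    cases σ e
    · exact this
    · exact this.symm
  have l2 : ∀ a b, zeroRel D' w' a b →
      Quot.mk (zeroRel D w) (f.symm a) = Quot.mk _ (f.symm b) := by
    rintro a b ⟨e', he, rfl, rfl⟩
    obtain ⟨e, rfl⟩ := φ.surjective e'
    have a1 := hn2 _ _ (h1 e)
    have a2 := hn2 _ _ (h2 e)
    have := zq e (by rw [← hw, he])
    rw [Equiv.symm_apply_apply] at a1 a2
    cases hs : σ e
    · rw [hs] at a1 a2
      exact a1.symm.trans (this.trans a2)
    · rw [hs] at a1 a2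
      exact a2.symm.trans (this.symm.trans a1)
  let ψ : Quot (zeroRel D w) ≃ Quot (zeroRel D' w') :=
    { toFun := Quot.lift (fun a => Quot.mk _ (f a)) l1
      invFun := Quot.lift (fun a => Quot.mk _ (f.symm a)) l2
      left_inv := by
        intro q
        induction q using Quot.ind with
        | mk a => exact congrArg (Quot.mk _) (f.symm_apply_apply a)
      right_inv := by
        intro q
        induction q using Quot.ind with
        | mk a => exact congrArg (Quot.mk _) (f.apply_symm_apply a) }
  refine ⟨?_, sub_iso D D' w w' φ σ hw ψ (fun e => hn1 _ _ (h1 e)) (fun e => hn1 _ _ (h2 e))⟩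
  unfold ZeroAcyclic at hZ ⊢
  rw [← Fintype.card_congr ψ, ← Fintype.card_congr f, ← hZ]
  congr 1
  refine (card_bij (fun e _ => φ e) ?_ ?_ ?_).symm
  · intro e he
    rw [mem_filter] at he ⊢
    exact ⟨mem_univ _, by rw [hw]; exact he.2⟩
  · intro a _ b _ h; exact φ.injective h
  · intro e' he'
    obtain ⟨e, rfl⟩ := φ.surjective e'
    rw [mem_filter, hw] at he'
    exact ⟨e, mem_filter.2 ⟨mem_univ _, he'.2⟩, rfl⟩

def fV (i : Fin 3) (v : Fin 3 × Bool) : Fin 3 ⊕ Fin 3 :=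
  if v.2 then (![Sum.inr 0, Sum.inr 2, Sum.inl 2] : Fin 3 → Fin 3 ⊕ Fin 3) (v.1 - i)
  else (![Sum.inl 0, Sum.inl 1, Sum.inr 1] : Fin 3 → Fin 3 ⊕ Fin 3) (v.1 - i)

def fE (i : Fin 3) : (Fin 3 × Bool) ⊕ Fin 3 → Fin 3 × Fin 3
  | Sum.inl (k, true) => (![(0, 2), (2, 2), (2, 0)] : Fin 3 → Fin 3 × Fin 3) (k - i)
  | Sum.inl (k, false) => (![(1, 0), (1, 1), (0, 1)] : Fin 3 → Fin 3 × Fin 3) (k - i)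
  | Sum.inr k => (![(0, 0), (1, 2), (2, 1)] : Fin 3 → Fin 3 × Fin 3) (k - i)

def fS (i : Fin 3) : (Fin 3 × Bool) ⊕ Fin 3 → Bool
  | Sum.inl (k, true) => (![false, true, false] : Fin 3 → Bool) (k - i)
  | Sum.inl (k, false) => (![true, false, true] : Fin 3 → Bool) (k - i)
  | Sum.inr k => (![false, false, true] : Fin 3 → Bool) (k - i)

def nearB (a b : Fin 3 ⊕ Fin 3) : Bool :=
  a == b || ((a == Sum.inl 0 && b == Sum.inr 0) || (a == Sum.inr 0 && b == Sum.inl 0))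

theorem fV_bij (i : Fin 3) : Function.Bijective (fV i) := by
  rw [Fintype.bijective_iff_injective_and_card]
  refine ⟨?_, by simp⟩
  unfold Function.Injective
  revert i
  decide +kernel

theorem fE_bij (i : Fin 3) : Function.Bijective (fE i) := by
  rw [Fintype.bijective_iff_injective_and_card]
  refine ⟨?_, by simp⟩
  unfold Function.Injective
  revert i
  decide +kernel

def fV' (i : Fin 3) : prism.V ≃ K33.V := Equiv.ofBijective (fV i) (fV_bij i)
def fE' (i : Fin 3) : prism.E ≃ K33.E := Equiv.ofBijective (fE i) (fE_bij i)

theorem near1 : ∀ (i : Fin 3) (e : (Fin 3 × Bool) ⊕ Fin 3),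
    nearB (fV i (prism.src e)) (if fS i e then Sum.inr (fE i e).2 else Sum.inl (fE i e).1) = true
    ∧ nearB (fV i (prism.tgt e))
      (if fS i e then Sum.inl (fE i e).1 else Sum.inr (fE i e).2) = true := by
  decide +kernel

theorem fV0 : ∀ i : Fin 3, fV i (i, false) = Sum.inl 0 ∧ fV i (i, true) = Sum.inr 0 ∧
    fE i (Sum.inr i) = (0, 0) := by
  decide +kernel

theorem nearB_imp0 : ∀ a b : Fin 3 ⊕ Fin 3, nearB a b = true →
    a = b ∨ (a = Sum.inl 0 ∧ b = Sum.inr 0) ∨ (a = Sum.inr 0 ∧ b = Sum.inl 0) := by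
  decide +kernel

theorem nearB_imp (a b : K33.V) (h : nearB a b = true) : a = b ∨ (a = kL 0 ∧ b = kR 0) ∨
      (a = kR 0 ∧ b = kL 0) := nearB_imp0 a b h

theorem part1b (G : Multigraph) (w : prism.E → ℕ) (hsub : IsWeakSubdivision G prism w)
    (i : Fin 3) (hr : w (pR i) = 0) : ∃ w' : K33.E → ℕ, IsWeakSubdivision G K33 w' := by
  obtain ⟨hZ, hI⟩ := hsub
  have hrq : (Quot.mk (zeroRel prism w) (pV i false)) = Quot.mk _ (pV i true) :=
    Quot.sound ⟨pR i, hr, rfl, rfl⟩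
  have hw : ∀ e, (fun e' => w ((fE' i).symm e')) (fE' i e) = w e := by intro e; simp
  have hk0 : (Quot.mk (zeroRel K33 (fun e' => w ((fE' i).symm e'))) (kL 0)) =
      Quot.mk _ (kR 0) := by
    refine Quot.sound ⟨fE' i (pR i), ?_, ?_, ?_⟩
    · rw [hw]; exact hr
    · exact congrArg (fun x : Fin 3 × Fin 3 => kL x.1) (fV0 i).2.2
    · exact congrArg (fun x : Fin 3 × Fin 3 => kR x.2) (fV0 i).2.2
  have s1 : (fV' i).symm (kL 0) = pV i false := by
    rw [Equiv.symm_apply_eq]; exact (fV0 i).1.symm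
  have s2 : (fV' i).symm (kR 0) = pV i true := by
    rw [Equiv.symm_apply_eq]; exact (fV0 i).2.1.symm
  have nb := nearB_imp
  have := transfer prism K33 w (fun e' => w ((fE' i).symm e')) (fE' i) (fS i) hw (fV' i)
    (fun a b => nearB a b = true) ?_ ?_ (fun e => (near1 i e).1) (fun e => (near1 i e).2) hZ
  · exact ⟨_, this.1, MGIso.trans' hI this.2⟩
  · intro a b h
    rcases nb a b h with rfl | ⟨rfl, rfl⟩ | ⟨rfl, rfl⟩
    · rfl
    · exact hk0
    · exact hk0.symm
  · intro a b h
    rcases nb a b h with rfl | ⟨rfl, rfl⟩ | ⟨rfl, rfl⟩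
    · rfl
    · rw [s1, s2]; exact hrq
    · rw [s1, s2]; exact hrq.symm


/-- a weak Π₃-subdivision G ∈ 𝒢_{n,n+3} is not a weak K_{3,3}-subdivision
iff all three rung chains are positive; in that case some weak K_{3,3}-subdivision
G' ∈ 𝒢_{n,n+3} satisfies d₂(G') ≤ d₂(G), d₃(G') < d₃(G), d₄(G') < d₄(G); in
particular G is not p-optimal for any p. -/
theorem prism_subdivision_not_optimal (n : ℕ) (hn : 2 ≤ n)
    (G : Multigraph) (hG : memG G n (n + 3))
    (w : prism.E → ℕ) (hsub : IsWeakSubdivision G prism w) :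
    ((¬ ∃ w' : K33.E → ℕ, IsWeakSubdivision G K33 w') ↔
      (∀ i : Fin 3, 0 < w (Sum.inr i))) ∧
    ((∀ i : Fin 3, 0 < w (Sum.inr i)) →
      (∃ G' : Multigraph, memG G' n (n + 3) ∧
        (∃ w' : K33.E → ℕ, IsWeakSubdivision G' K33 w') ∧
        G'.d 2 ≤ G.d 2 ∧ G'.d 3 < G.d 3 ∧ G'.d 4 < G.d 4) ∧
      (∀ p : ℝ, 0 < p → p < 1 → ¬ pOptimal G n (n + 3) p)) := by
  refine ⟨⟨?_, fun hr => part1a G w hsub hr⟩, fun hr => part2 n hn G hG w hsub hr⟩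
  intro h i
  by_contra hi
  exact h (part1b G w hsub i (Nat.eq_zero_of_not_pos hi))
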